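/- arXiv:2605.21169 — 6 statements merged into one kernel-verified Lean document; each statement's English description precedes it below -/
import Mathlib

section
/- Inexact Taylor value bound under consensus (Lemma 1, value part): for every i = 1,…,m and every x ∈ ℝ^d, |f(x) − φ̂_i(x)| ≤ Δ₁·‖x − x̂_i‖ + (Δ₂/2)·‖x − x̂_i‖² + (L̄₂/6)·‖x − x̂_i‖³. -/
/-!
Each local function satisfies the classical second-order Taylor bound with a Lipschitz Hessian
(`taylor_remainder_le`): the gradient remainder along the segment grows at most like
`L t² ‖v‖² / 2`, and integrating once more gives `L ‖v‖³ / 6`. Averaging over the local functions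
bounds the remainder of the exact Taylor model of the global objective at `xh i`. Replacing the
exact averaged gradient and Hessian at `xh i` by `g i` and `H i` costs, in norm, the consensus
error plus the Lipschitz drift between `xh i` and `xh j`, where `‖xh i - xh j‖ ≤ 2 Δx`
(`consensus_drift_le`).
-/

open scoped RealInnerProductSpace
open Finset

/-- The Hessian of `f : E → ℝ` at `x`, as a continuous linear map `E →L[ℝ] E`
(the derivative of the gradient). Its norm is the operator norm. -/
noncomputable def hess {E : Type*} [NormedAddCommGroup E] [InnerProductSpace ℝ E]
    [FiniteDimensional ℝ E] (f : E → ℝ) (x : E) : E →L[ℝ] E :=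
  fderiv ℝ (gradient f) x

section Taylor

variable {E : Type*} [NormedAddCommGroup E] [InnerProductSpace ℝ E] [FiniteDimensional ℝ E]

lemma differentiable_gradient {f : E → ℝ} (hf : ContDiff ℝ 2 f) :
    Differentiable ℝ (gradient f) := by
  have h1 : ContDiff ℝ 1 (fderiv ℝ f) := hf.fderiv_right (by norm_num)
  exact (InnerProductSpace.toDual ℝ E).symm.differentiable.comp (h1.differentiable (by norm_num))

/-- Gradient remainder along the ray `y + t v`, obtained by integrating the Lipschitz bound on the
Hessian. -/
lemma gradient_remainder_le {f : E → ℝ} (hf : ContDiff ℝ 2 f) {L : ℝ}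
    (hL : ∀ x y : E, ‖hess f x - hess f y‖ ≤ L * ‖x - y‖) (y v : E) {t : ℝ}
    (ht : t ∈ Set.Icc (0 : ℝ) 1) :
    ‖gradient f (y + t • v) - gradient f y - t • hess f y v‖ ≤ L * ‖v‖ ^ 2 * t ^ 2 / 2 := by
  have hline (s : ℝ) : HasDerivAt (fun s : ℝ => y + s • v) v s := by
    simpa using ((hasDerivAt_id s).smul_const v).const_add y
  have hderiv (s : ℝ) : HasDerivAt
      (fun s : ℝ => gradient f (y + s • v) - gradient f y - s • hess f y v)
      (hess f (y + s • v) v - hess f y v) s := by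
    have h1 := ((differentiable_gradient hf (y + s • v)).hasFDerivAt).comp_hasDerivAt s (hline s)
    have h2 := (hasDerivAt_id s).smul_const (hess f y v)
    exact ((h1.sub_const (gradient f y)).sub h2).congr_deriv (by simp [hess])
  have hB (s : ℝ) : HasDerivAt (fun s : ℝ => L * ‖v‖ ^ 2 * s ^ 2 / 2) (L * ‖v‖ ^ 2 * s) s := by
    have := ((hasDerivAt_pow 2 s).const_mul (L * ‖v‖ ^ 2)).div_const 2
    refine this.congr_deriv ?_
    push_cast
    ring
  refine image_norm_le_of_norm_deriv_right_le_deriv_boundary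
    (a := 0) (b := 1) (fun s _ => (hderiv s).continuousAt.continuousWithinAt)
    (fun s _ => (hderiv s).hasDerivWithinAt) (by simp) hB ?_ ht
  intro s hs
  calc ‖hess f (y + s • v) v - hess f y v‖
      = ‖(hess f (y + s • v) - hess f y) v‖ := by simp
    _ ≤ ‖hess f (y + s • v) - hess f y‖ * ‖v‖ := ContinuousLinearMap.le_opNorm _ _
    _ ≤ (L * ‖y + s • v - y‖) * ‖v‖ := by gcongr; exact hL _ _
    _ = L * ‖v‖ ^ 2 * s := by
      rw [add_sub_cancel_left, norm_smul, Real.norm_of_nonneg hs.1]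
      ring

lemma taylor_remainder_le {f : E → ℝ} (hf : ContDiff ℝ 2 f) {L : ℝ}
    (hL : ∀ x y : E, ‖hess f x - hess f y‖ ≤ L * ‖x - y‖) (y v : E) :
    |f (y + v) - f y - ⟪gradient f y, v⟫ - (1 / 2) * ⟪hess f y v, v⟫| ≤ L / 6 * ‖v‖ ^ 3 := by
  have hline (s : ℝ) : HasDerivAt (fun s : ℝ => y + s • v) v s := by
    simpa using ((hasDerivAt_id s).smul_const v).const_add y
  have hderiv (s : ℝ) : HasDerivAt
      (fun s : ℝ => f (y + s • v) - f y - s * ⟪gradient f y, v⟫ - s ^ 2 / 2 * ⟪hess f y v, v⟫)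
      ⟪gradient f (y + s • v) - gradient f y - s • hess f y v, v⟫ s := by
    have hd : DifferentiableAt ℝ f (y + s • v) := hf.differentiable (by norm_num) _
    have h1 := hd.hasGradientAt.hasFDerivAt.comp_hasDerivAt s (hline s)
    have h2 := (hasDerivAt_id s).mul_const ⟪gradient f y, v⟫
    have h3 := ((hasDerivAt_pow 2 s).div_const 2).mul_const ⟪hess f y v, v⟫
    refine (((h1.sub_const (f y)).sub h2).sub h3).congr_deriv ?_
    simp only [inner_sub_left, real_inner_smul_left, InnerProductSpace.toDual_apply_apply]
    push_cast
    ring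
  have hB (s : ℝ) : HasDerivAt (fun s : ℝ => L / 6 * ‖v‖ ^ 3 * s ^ 3)
      (L * ‖v‖ ^ 2 * s ^ 2 / 2 * ‖v‖) s := by
    refine ((hasDerivAt_pow 3 s).const_mul (L / 6 * ‖v‖ ^ 3)).congr_deriv ?_
    push_cast
    ring
  have key := image_norm_le_of_norm_deriv_right_le_deriv_boundary
    (a := 0) (b := 1) (fun s _ => (hderiv s).continuousAt.continuousWithinAt)
    (fun s _ => (hderiv s).hasDerivWithinAt) (by simp) hB
    (fun s hs => (norm_inner_le_norm _ _).trans (mul_le_mul_of_nonneg_right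
      (gradient_remainder_le hf hL y v ⟨hs.1, hs.2.le⟩) (norm_nonneg v)))
    (Set.right_mem_Icc.2 zero_le_one)
  simpa using key

end Taylor

section Averages

variable {V : Type*} [NormedAddCommGroup V] [NormedSpace ℝ V]

lemma norm_average_le {m : ℕ} {a : Fin m → V} {c : Fin m → ℝ} (h : ∀ j, ‖a j‖ ≤ c j) :
    ‖(m : ℝ)⁻¹ • ∑ j, a j‖ ≤ (m : ℝ)⁻¹ * ∑ j, c j := by
  rw [norm_smul, Real.norm_of_nonneg (by positivity)]
  gcongr
  exact norm_sum_le_of_le _ fun j _ => h j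

/-- If `G` approximates the average of the `P j` evaluated at their own points `xh j`, then it
approximates the average at the single point `xh i`, up to an extra error coming from the
Lipschitz constants and the mutual distances `‖xh i - xh j‖ ≤ 2 Δx`. -/
lemma consensus_drift_le {E : Type*} [NormedAddCommGroup E] {m : ℕ} {P : Fin m → E → V}
    {c : Fin m → ℝ} (hc : ∀ j, 0 ≤ c j)
    (hP : ∀ j (x y : E), ‖P j x - P j y‖ ≤ c j * ‖x - y‖)
    {xh : Fin m → E} {xbar : E} {Δx : ℝ} (hxh : ∀ j, ‖xh j - xbar‖ ≤ Δx)
    {G : V} {δ : ℝ} (hG : ‖G - (m : ℝ)⁻¹ • ∑ j, P j (xh j)‖ ≤ δ) (i : Fin m) :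
    ‖(m : ℝ)⁻¹ • ∑ j, P j (xh i) - G‖ ≤ δ + 2 * ((m : ℝ)⁻¹ * ∑ j, c j) * Δx := by
  have hdrift : ∀ j, ‖P j (xh i) - P j (xh j)‖ ≤ c j * (2 * Δx) := by
    intro j
    have hij : ‖xh i - xh j‖ ≤ 2 * Δx := by
      have := norm_sub_le_norm_sub_add_norm_sub (xh i) xbar (xh j)
      rw [norm_sub_rev xbar] at this
      linarith [hxh i, hxh j]
    exact (hP j _ _).trans (mul_le_mul_of_nonneg_left hij (hc j))
  have havg := norm_average_le hdrift
  rw [sum_sub_distrib, smul_sub, ← sum_mul] at havg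
  rw [norm_sub_rev] at hG
  have := norm_sub_le_norm_sub_add_norm_sub ((m : ℝ)⁻¹ • ∑ j, P j (xh i))
    ((m : ℝ)⁻¹ • ∑ j, P j (xh j)) G
  linarith

end Averages

/-- **Inexact Taylor value bound under consensus** (Lemma 1, value part). -/
theorem inexact_taylor_value_bound
    {E : Type*} [NormedAddCommGroup E] [InnerProductSpace ℝ E] [FiniteDimensional ℝ E]
    {m : ℕ} (hm : 1 ≤ m)
    (f : Fin m → E → ℝ)
    (hC2 : ∀ i, ContDiff ℝ 2 (f i))
    (L1 L2 : Fin m → ℝ)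
    (hL1 : ∀ i (x y : E), ‖gradient (f i) x - gradient (f i) y‖ ≤ L1 i * ‖x - y‖)
    (hL2 : ∀ i (x y : E), ‖hess (f i) x - hess (f i) y‖ ≤ L2 i * ‖x - y‖)
    (F : E → ℝ) (hF : F = fun x => (m : ℝ)⁻¹ * ∑ i, f i x)
    (L1bar L2bar : ℝ)
    (hL1bar : L1bar = (m : ℝ)⁻¹ * ∑ i, L1 i)
    (hL2bar : L2bar = (m : ℝ)⁻¹ * ∑ i, L2 i)
    (xh : Fin m → E) (xbar : E) (Δx : ℝ)
    (hxh : ∀ i, ‖xh i - xbar‖ ≤ Δx)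
    (g : Fin m → E) (Δg : ℝ)
    (hg : ∀ i, ‖g i - (m : ℝ)⁻¹ • ∑ j, gradient (f j) (xh j)‖ ≤ Δg)
    (H : Fin m → E →L[ℝ] E) (ΔH : ℝ)
    (hHsym : ∀ i (v w : E), ⟪H i v, w⟫ = ⟪v, H i w⟫)
    (hH : ∀ i, ‖H i - (m : ℝ)⁻¹ • ∑ j, hess (f j) (xh j)‖ ≤ ΔH)
    (Δ1 Δ2 : ℝ)
    (hΔ1 : Δ1 = Δg + 2 * L1bar * Δx)
    (hΔ2 : Δ2 = ΔH + 2 * L2bar * Δx)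
    (i : Fin m) (x : E) :
    |F x - (F (xh i) + ⟪g i, x - xh i⟫ + (1 / 2) * ⟪H i (x - xh i), x - xh i⟫)|
      ≤ Δ1 * ‖x - xh i‖ + (Δ2 / 2) * ‖x - xh i‖ ^ 2 + (L2bar / 6) * ‖x - xh i‖ ^ 3 := by
  obtain hv | hv := eq_or_ne (x - xh i) 0
  · rw [sub_eq_zero] at hv
    simp [hv]
  -- Distinct points exist, so the Lipschitz constants are nonnegative.
  have hpos : 0 < ‖x - xh i‖ := norm_pos_iff.2 hv
  have hc1 : ∀ j, 0 ≤ L1 j := fun j =>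
    nonneg_of_mul_nonneg_left ((norm_nonneg _).trans (hL1 j x (xh i))) hpos
  have hc2 : ∀ j, 0 ≤ L2 j := fun j =>
    nonneg_of_mul_nonneg_left ((norm_nonneg _).trans (hL2 j x (xh i))) hpos
  have hgrad := consensus_drift_le hc1 hL1 hxh (hg i) i
  have hhess := consensus_drift_le hc2 hL2 hxh (hH i) i
  have hlocal := fun j => taylor_remainder_le (hC2 j) (hL2 j) (xh i) (x - xh i)
  simp only [← Real.norm_eq_abs] at hlocal
  have htaylor := norm_average_le hlocal
  rw [← hL1bar, ← hΔ1] at hgrad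
  rw [← hL2bar, ← hΔ2] at hhess
  rw [← sum_mul, ← sum_div, ← mul_assoc, ← mul_div_assoc, ← hL2bar, Real.norm_eq_abs] at htaylor
  set v := x - xh i with hvdef
  have hx : xh i + v = x := by simp [hvdef]
  set A := (m : ℝ)⁻¹ • ∑ j, gradient (f j) (xh i) with hA
  set B := (m : ℝ)⁻¹ • ∑ j, hess (f j) (xh i) with hB
  have hlin : |⟪A - g i, v⟫| ≤ Δ1 * ‖v‖ :=
    (abs_real_inner_le_norm _ _).trans (by gcongr)
  have hquad : |⟪(B - H i) v, v⟫| ≤ Δ2 * ‖v‖ ^ 2 := by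
    calc |⟪(B - H i) v, v⟫| ≤ ‖(B - H i) v‖ * ‖v‖ := abs_real_inner_le_norm _ _
      _ ≤ (Δ2 * ‖v‖) * ‖v‖ := by
        gcongr
        exact ContinuousLinearMap.le_of_opNorm_le _ hhess v
      _ = Δ2 * ‖v‖ ^ 2 := by ring
  have hdecomp : F x - (F (xh i) + ⟪g i, v⟫ + (1 / 2) * ⟪H i v, v⟫) =
      (m : ℝ)⁻¹ • ∑ j, (f j (xh i + v) - f j (xh i) - ⟪gradient (f j) (xh i), v⟫
        - (1 / 2) * ⟪hess (f j) (xh i) v, v⟫) + ⟪A - g i, v⟫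
        + (1 / 2) * ⟪(B - H i) v, v⟫ := by
    simp only [hF, hA, hB, hx, smul_eq_mul, sum_sub_distrib, ← mul_sum, inner_sub_left,
      real_inner_smul_left, sum_inner, _root_.sub_apply,
      _root_.smul_apply, _root_.sum_apply]
    ring
  rw [hdecomp]
  rw [abs_le] at *
  constructor <;> linarith [hlin.1, hlin.2, hquad.1, hquad.2, htaylor.1, htaylor.2]
end

section
/- Descent Lemma for the decentralized cubic step (Lemma 2): suppose δ₁ ≥ Δ₁, δ₂ ≥ Δ₂, L ≥ L̄₂ and γ > 0, and let x_i⁺ be a global minimizer over ℝ^d of the local cubic model ω̂_i. Then f(x_i⁺) ≤ inf_{x ∈ ℝ^d} { f(x) + ((L + L̄₂)/6)·‖x − x̂_i‖³ + (γδ₁ + δ₂)·‖x − x̂_i‖² } + δ₁/γ. -/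
/-!
Write `h = y - x̂ᵢ`. The Taylor estimate with Lipschitz Hessian (`taylor_hess_bound`), together with
the Lipschitz bounds that move each gradient and Hessian from `x̂ⱼ` to `x̂ᵢ` (`local_model_bound`),
shows after averaging over `j` that the quadratic part of the local model approximates
`F y - F x̂ᵢ` up to `Δ₁‖h‖ + (Δ₂/2)‖h‖² + (L̄₂/6)‖h‖³` (`averaged_model_bound`). By Young's inequality
`‖h‖ ≤ 1/(2γ) + (γ/2)‖h‖²`, this error is at most the regularization contained in `ωᵢ`. Hence
`F ≤ F x̂ᵢ + ωᵢ` everywhere, while `F x̂ᵢ + ωᵢ x` exceeds `F x` by at most twice the constant and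
quadratic regularization plus the two cubic terms; minimality of `xᵢ⁺` links the two bounds.
-/

open scoped RealInnerProductSpace
open Finset

/-- Second-order Taylor estimate for a function with Lipschitz Hessian, obtained by comparing
derivatives twice along the segment `t ↦ a + t • h`, `t ∈ [0, 1]`. -/
theorem taylor_hess_bound {E : Type*} [NormedAddCommGroup E] [InnerProductSpace ℝ E]
    [FiniteDimensional ℝ E] (f : E → ℝ) (hC2 : ContDiff ℝ 2 f) (K : ℝ)
    (hK : ∀ x y : E, ‖hess f x - hess f y‖ ≤ K * ‖x - y‖) (a h : E) :
    |f (a + h) - f a - ⟪gradient f a, h⟫ - (1 / 2) * ⟪hess f a h, h⟫| ≤ K / 6 * ‖h‖ ^ 3 := by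
  have hfd : ∀ x, HasGradientAt f (gradient f x) x := fun x =>
    ((hC2.differentiable (by norm_num)) x).hasGradientAt
  have hgd : ∀ x, HasFDerivAt (gradient f) (hess f x) x := by
    intro x
    have h1 : ContDiff ℝ 1 (fderiv ℝ f) := hC2.fderiv_right (by norm_num)
    have h2 : Differentiable ℝ (gradient f) :=
      (InnerProductSpace.toDual ℝ E).symm.toContinuousLinearEquiv.differentiable.comp
        (h1.differentiable (by norm_num))
    exact (h2 x).hasFDerivAt
  have hline : ∀ t : ℝ, HasDerivAt (fun s : ℝ => a + s • h) h t := fun t => by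
    simpa using ((hasDerivAt_id t).smul_const h).const_add a
  have hφ : ∀ t : ℝ, HasDerivAt (fun s : ℝ => f (a + s • h)) ⟪gradient f (a + t • h), h⟫ t := by
    intro t
    exact ((hfd (a + t • h)).hasFDerivAt.comp_hasDerivAt t (hline t)).congr_deriv (by simp)
  have hφ' : ∀ t : ℝ, HasDerivAt (fun s : ℝ => ⟪gradient f (a + s • h), h⟫)
      ⟪hess f (a + t • h) h, h⟫ t := by
    intro t
    have := ((hgd (a + t • h)).comp_hasDerivAt t (hline t)).inner ℝ (hasDerivAt_const t h)
    simpa using this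
  have hψ : ∀ t : ℝ, HasDerivAt
      (fun s : ℝ => ⟪gradient f (a + s • h), h⟫ - ⟪gradient f a, h⟫ - s * ⟪hess f a h, h⟫)
      (⟪hess f (a + t • h) h, h⟫ - ⟪hess f a h, h⟫) t := by
    intro t
    exact (((hφ' t).sub_const _).sub ((hasDerivAt_id t).mul_const ⟪hess f a h, h⟫)).congr_deriv
      (by simp)
  have hχ : ∀ t : ℝ, HasDerivAt
      (fun s : ℝ => f (a + s • h) - f a - s * ⟪gradient f a, h⟫ - s ^ 2 / 2 * ⟪hess f a h, h⟫)
      (⟪gradient f (a + t • h), h⟫ - ⟪gradient f a, h⟫ - t * ⟪hess f a h, h⟫) t := by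
    intro t
    have h2 : HasDerivAt (fun s : ℝ => s ^ 2 / 2) t t := by
      simpa using (hasDerivAt_pow 2 t).div_const 2
    exact ((((hφ t).sub_const (f a)).sub ((hasDerivAt_id t).mul_const ⟪gradient f a, h⟫)).sub
      (h2.mul_const ⟪hess f a h, h⟫)).congr_deriv (by simp)
  have b1 : ∀ t ∈ Set.Icc (0 : ℝ) 1,
      ‖⟪gradient f (a + t • h), h⟫ - ⟪gradient f a, h⟫ - t * ⟪hess f a h, h⟫‖
        ≤ K * ‖h‖ ^ 3 * (t ^ 2 / 2) := by
    intro t ht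
    refine image_norm_le_of_norm_deriv_right_le_deriv_boundary
      (f' := fun t => ⟪hess f (a + t • h) h, h⟫ - ⟪hess f a h, h⟫)
      (B := fun t => K * ‖h‖ ^ 3 * (t ^ 2 / 2)) (B' := fun t => K * ‖h‖ ^ 3 * t)
      (fun t _ => (hψ t).continuousAt.continuousWithinAt)
      (fun t _ => (hψ t).hasDerivWithinAt) (by simp) (fun t => ?_) (fun t ht => ?_) ht
    · simpa using ((hasDerivAt_pow 2 t).div_const 2).const_mul (K * ‖h‖ ^ 3)
    · have e : ⟪hess f (a + t • h) h, h⟫ - ⟪hess f a h, h⟫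
          = ⟪(hess f (a + t • h) - hess f a) h, h⟫ := by
        simp [inner_sub_left]
      have e2 := hK (a + t • h) a
      rw [add_sub_cancel_left, norm_smul, Real.norm_of_nonneg ht.1] at e2
      calc ‖⟪hess f (a + t • h) h, h⟫ - ⟪hess f a h, h⟫‖
          ≤ ‖(hess f (a + t • h) - hess f a) h‖ * ‖h‖ := by rw [e]; exact norm_inner_le_norm _ _
        _ ≤ ‖hess f (a + t • h) - hess f a‖ * ‖h‖ * ‖h‖ := by
          gcongr; exact ContinuousLinearMap.le_opNorm _ _
        _ ≤ K * (t * ‖h‖) * ‖h‖ * ‖h‖ := by gcongr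
        _ = K * ‖h‖ ^ 3 * t := by ring
  have b2 := image_norm_le_of_norm_deriv_right_le_deriv_boundary (a := (0 : ℝ)) (b := 1)
      (f := fun s : ℝ =>
        f (a + s • h) - f a - s * ⟪gradient f a, h⟫ - s ^ 2 / 2 * ⟪hess f a h, h⟫)
      (f' := fun t => ⟪gradient f (a + t • h), h⟫ - ⟪gradient f a, h⟫ - t * ⟪hess f a h, h⟫)
      (B := fun t => K * ‖h‖ ^ 3 * (t ^ 3 / 6)) (B' := fun t => K * ‖h‖ ^ 3 * (t ^ 2 / 2))
      (fun t _ => (hχ t).continuousAt.continuousWithinAt)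
      (fun t _ => (hχ t).hasDerivWithinAt) (by simp)
      (fun t => (((hasDerivAt_pow 3 t).div_const 6).const_mul (K * ‖h‖ ^ 3)).congr_deriv (by
        push_cast
        ring))
      (fun t ht => b1 t ⟨ht.1, ht.2.le⟩) (Set.right_mem_Icc.2 zero_le_one)
  rw [Real.norm_eq_abs] at b2
  simp only [one_smul, one_mul, one_pow] at b2
  linarith

/-- Taylor estimate based at `a` when the gradient and the Hessian are evaluated at a nearby
point `b`. -/
theorem local_model_bound {E : Type*} [NormedAddCommGroup E] [InnerProductSpace ℝ E]
    [FiniteDimensional ℝ E] (f : E → ℝ) (hC2 : ContDiff ℝ 2 f) (K₁ K₂ r : ℝ)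
    (hK₁ : ∀ x y : E, ‖gradient f x - gradient f y‖ ≤ K₁ * ‖x - y‖)
    (hK₂ : ∀ x y : E, ‖hess f x - hess f y‖ ≤ K₂ * ‖x - y‖)
    (hK₁0 : 0 ≤ K₁) (hK₂0 : 0 ≤ K₂) (a b h : E) (hab : ‖a - b‖ ≤ r) :
    |f (a + h) - f a - ⟪gradient f b, h⟫ - (1 / 2) * ⟪hess f b h, h⟫|
      ≤ K₁ * r * ‖h‖ + K₂ * r / 2 * ‖h‖ ^ 2 + K₂ / 6 * ‖h‖ ^ 3 := by
  have h0 := taylor_hess_bound f hC2 K₂ hK₂ a h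
  have h1 : |⟪gradient f a - gradient f b, h⟫| ≤ K₁ * r * ‖h‖ :=
    (abs_real_inner_le_norm _ _).trans (by gcongr; exact (hK₁ a b).trans (by gcongr))
  have h2 : |⟪(hess f a - hess f b) h, h⟫| ≤ K₂ * r * ‖h‖ * ‖h‖ := by
    refine (abs_real_inner_le_norm _ _).trans ?_
    gcongr
    refine (ContinuousLinearMap.le_opNorm _ _).trans ?_
    gcongr
    exact (hK₂ a b).trans (by gcongr)
  rw [inner_sub_left] at h1
  rw [_root_.sub_apply, inner_sub_left] at h2
  rw [abs_le] at *
  constructor <;> nlinarith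

/-- The quadratic model built from inexact averages `g` and `H` of the gradients and Hessians
at the points `xh j` approximates the averaged objective near any `a` with `‖a - xh j‖ ≤ r`. -/
theorem averaged_model_bound {E : Type*} [NormedAddCommGroup E] [InnerProductSpace ℝ E]
    [FiniteDimensional ℝ E] {m : ℕ} (hm : 1 ≤ m) (f : Fin m → E → ℝ)
    (hC2 : ∀ i, ContDiff ℝ 2 (f i)) (L1 L2 : Fin m → ℝ)
    (hL1 : ∀ i (x y : E), ‖gradient (f i) x - gradient (f i) y‖ ≤ L1 i * ‖x - y‖)
    (hL2 : ∀ i (x y : E), ‖hess (f i) x - hess (f i) y‖ ≤ L2 i * ‖x - y‖)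
    (hL1nn : ∀ i, 0 ≤ L1 i) (hL2nn : ∀ i, 0 ≤ L2 i)
    (xh : Fin m → E) (a h : E) (r : ℝ) (har : ∀ j, ‖a - xh j‖ ≤ r)
    (g : E) (Δg : ℝ) (hg : ‖g - (m : ℝ)⁻¹ • ∑ j, gradient (f j) (xh j)‖ ≤ Δg)
    (H : E →L[ℝ] E) (ΔH : ℝ) (hH : ‖H - (m : ℝ)⁻¹ • ∑ j, hess (f j) (xh j)‖ ≤ ΔH) :
    |(m : ℝ)⁻¹ * ∑ j, f j (a + h) - (m : ℝ)⁻¹ * ∑ j, f j a - ⟪g, h⟫ - (1 / 2) * ⟪H h, h⟫|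
      ≤ (Δg + (m : ℝ)⁻¹ * (∑ j, L1 j) * r) * ‖h‖
        + (ΔH + (m : ℝ)⁻¹ * (∑ j, L2 j) * r) / 2 * ‖h‖ ^ 2
        + (m : ℝ)⁻¹ * (∑ j, L2 j) / 6 * ‖h‖ ^ 3 := by
  have h0 : |∑ j, (f j (a + h) - f j a - ⟪gradient (f j) (xh j), h⟫
      - (1 / 2) * ⟪hess (f j) (xh j) h, h⟫)| ≤
      ∑ j, (L1 j * r * ‖h‖ + L2 j * r / 2 * ‖h‖ ^ 2 + L2 j / 6 * ‖h‖ ^ 3) :=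
    (Finset.abs_sum_le_sum_abs _ _).trans (Finset.sum_le_sum fun j _ =>
      local_model_bound (f j) (hC2 j) _ _ r (hL1 j) (hL2 j) (hL1nn j) (hL2nn j) a (xh j) h (har j))
  have h1 : |⟪g - (m : ℝ)⁻¹ • ∑ j, gradient (f j) (xh j), h⟫| ≤ Δg * ‖h‖ :=
    (abs_real_inner_le_norm _ _).trans (by gcongr)
  have h2 : |⟪(H - (m : ℝ)⁻¹ • ∑ j, hess (f j) (xh j)) h, h⟫| ≤ ΔH * ‖h‖ * ‖h‖ := by
    refine (abs_real_inner_le_norm _ _).trans ?_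
    gcongr
    exact (ContinuousLinearMap.le_opNorm _ _).trans (by gcongr)
  have hc : 0 ≤ (m : ℝ)⁻¹ := by positivity
  have h3 := mul_le_mul_of_nonneg_left h0 hc
  rw [← abs_of_nonneg hc, ← abs_mul, abs_of_nonneg hc] at h3
  simp only [Finset.sum_sub_distrib, Finset.sum_add_distrib, ← Finset.mul_sum, ← Finset.sum_mul,
    ← Finset.sum_div] at h3
  simp only [inner_sub_left, real_inner_smul_left, sum_inner, _root_.sub_apply,
    _root_.smul_apply, _root_.sum_apply] at h1 h2
  rw [abs_le] at *
  constructor <;> nlinarith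

/-- **Descent Lemma for the decentralized cubic step** (Lemma 2). -/
theorem decentralized_cubic_descent
    {E : Type*} [NormedAddCommGroup E] [InnerProductSpace ℝ E] [FiniteDimensional ℝ E]
    {m : ℕ} (hm : 1 ≤ m)
    (f : Fin m → E → ℝ)
    (hC2 : ∀ i, ContDiff ℝ 2 (f i))
    (L1 L2 : Fin m → ℝ)
    (hL1 : ∀ i (x y : E), ‖gradient (f i) x - gradient (f i) y‖ ≤ L1 i * ‖x - y‖)
    (hL2 : ∀ i (x y : E), ‖hess (f i) x - hess (f i) y‖ ≤ L2 i * ‖x - y‖)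
    (F : E → ℝ) (hF : F = fun x => (m : ℝ)⁻¹ * ∑ i, f i x)
    (L1bar L2bar : ℝ)
    (hL1bar : L1bar = (m : ℝ)⁻¹ * ∑ i, L1 i)
    (hL2bar : L2bar = (m : ℝ)⁻¹ * ∑ i, L2 i)
    (xh : Fin m → E) (xbar : E) (Δx : ℝ)
    (hxh : ∀ i, ‖xh i - xbar‖ ≤ Δx)
    (g : Fin m → E) (Δg : ℝ)
    (hg : ∀ i, ‖g i - (m : ℝ)⁻¹ • ∑ j, gradient (f j) (xh j)‖ ≤ Δg)
    (H : Fin m → E →L[ℝ] E) (ΔH : ℝ)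
    (hHsym : ∀ i (v w : E), ⟪H i v, w⟫ = ⟪v, H i w⟫)
    (hH : ∀ i, ‖H i - (m : ℝ)⁻¹ • ∑ j, hess (f j) (xh j)‖ ≤ ΔH)
    (Δ1 Δ2 : ℝ)
    (hΔ1 : Δ1 = Δg + 2 * L1bar * Δx)
    (hΔ2 : Δ2 = ΔH + 2 * L2bar * Δx)
    -- parameters of the local cubic model
    (γ δ1 δ2 L : ℝ)
    (hγ : 0 < γ) (hδ1nn : 0 ≤ δ1) (hδ2nn : 0 ≤ δ2) (hLpos : 0 < L)
    (hδ1 : Δ1 ≤ δ1) (hδ2 : Δ2 ≤ δ2) (hL : L2bar ≤ L)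
    -- the local cubic model and its global minimizer
    (ω : Fin m → E → ℝ)
    (hω : ∀ i y, ω i y =
      ⟪g i, y - xh i⟫ + (1 / 2) * ⟪H i (y - xh i), y - xh i⟫ + δ1 / (2 * γ)
        + ((γ * δ1 + δ2) / 2) * ‖y - xh i‖ ^ 2 + (L / 6) * ‖y - xh i‖ ^ 3)
    (xp : Fin m → E)
    (hmin : ∀ i y, ω i (xp i) ≤ ω i y)
    (i : Fin m) :
    ∀ x : E, F (xp i)
      ≤ F x + ((L + L2bar) / 6) * ‖x - xh i‖ ^ 3 + (γ * δ1 + δ2) * ‖x - xh i‖ ^ 2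
        + δ1 / γ := by
  intro x
  rcases subsingleton_or_nontrivial E with hE | hE
  -- On the trivial space the Lipschitz constants may be negative, but the claim is `0 ≤ δ1 / γ`.
  · rw [Subsingleton.elim (xp i) x, Subsingleton.elim x (xh i)]
    have : 0 ≤ δ1 / γ := by positivity
    simpa using this
  obtain ⟨u, hu⟩ := exists_norm_eq E (zero_le_one (α := ℝ))
  have hL1nn : ∀ j, 0 ≤ L1 j := fun j => by
    simpa [hu] using (norm_nonneg _).trans (hL1 j u 0)
  have hL2nn : ∀ j, 0 ≤ L2 j := fun j => by
    simpa [hu] using (norm_nonneg _).trans (hL2 j u 0)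
  have hr : ∀ j, ‖xh i - xh j‖ ≤ 2 * Δx := fun j => by
    have h1 := norm_sub_le_norm_sub_add_norm_sub (xh i) xbar (xh j)
    have h2 := hxh j
    rw [norm_sub_rev] at h2
    linarith [hxh i]
  have key : ∀ y, |F y - F (xh i) - ⟪g i, y - xh i⟫ - (1 / 2) * ⟪H i (y - xh i), y - xh i⟫|
      ≤ δ1 / (2 * γ) + (γ * δ1 + δ2) / 2 * ‖y - xh i‖ ^ 2 + L2bar / 6 * ‖y - xh i‖ ^ 3 := by
    intro y
    have h := averaged_model_bound hm f hC2 L1 L2 hL1 hL2 hL1nn hL2nn xh (xh i) (y - xh i)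
      (2 * Δx) hr (g i) Δg (hg i) (H i) ΔH (hH i)
    rw [add_sub_cancel, ← hL1bar, ← hL2bar] at h
    have e1 : Δg + L1bar * (2 * Δx) ≤ δ1 := by linarith
    have e2 : ΔH + L2bar * (2 * Δx) ≤ δ2 := by linarith
    simp only [hF]
    refine h.trans ?_
    set n := ‖y - xh i‖
    have hn : 0 ≤ n := norm_nonneg _
    -- Young's inequality, from `(1 - γ n)² ≥ 0`.
    have young : δ1 * n ≤ δ1 / (2 * γ) + γ * δ1 / 2 * n ^ 2 := by
      have : δ1 / (2 * γ) + γ * δ1 / 2 * n ^ 2 - δ1 * n = δ1 / (2 * γ) * (1 - γ * n) ^ 2 := by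
        field_simp
        ring
      have : 0 ≤ δ1 / (2 * γ) * (1 - γ * n) ^ 2 := by positivity
      linarith
    have a1 := mul_le_mul_of_nonneg_right e1 hn
    have a2 := mul_le_mul_of_nonneg_right e2 (sq_nonneg n)
    linarith
  have kp := (abs_le.1 (key (xp i))).2
  have kx := (abs_le.1 (key x)).1
  have hmx := hmin i x
  rw [hω, hω] at hmx
  have h3 := mul_le_mul_of_nonneg_right hL (by positivity : 0 ≤ ‖xp i - xh i‖ ^ 3)
  have hhalf : δ1 / γ = δ1 / (2 * γ) + δ1 / (2 * γ) := by
    field_simp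
    norm_num
  rw [hhalf]
  linarith
end

section
/- Upper bound on the accelerated estimating sequence (Lemma 5 / acc_psi_upper): assume f is μ̄-strongly convex with μ̄ ≥ 0, L ≥ L̄₂, and δ_{2,0} ≥ Δ₂⁰. Let x_i^1 be a global minimizer of ν̂_i^0(x) = ⟨ĝ_i^0, x − v̂_i^0⟩ + (1/2)⟨Ĥ_i^0(x − v̂_i^0), x − v̂_i^0⟩ + (δ_{2,0}/2)‖x − v̂_i^0‖² + (L/6)‖x − v̂_i^0‖³. Then for every node i, every k ≥ 1, and every x ∈ ℝ^d: ψ_i^k(x) ≤ f(x)/A_{k−1} + Δ₁⁰·‖x_i^1 − v̂_i^0‖ + Δ₁⁰·‖x − v̂_i^0‖ + ((Δ₂⁰ + δ_{2,0} + κ_{2,k−1})/2)·‖x − v̂_i^0‖² + ((L̄₂ + L + κ_{3,k−1})/6)·‖x − v̂_i^0‖³ + Σ_{j=1}^{k−1} (α_j/A_j)·⟨ĝ_i(x_i^{j+1}) − ∇f(x_i^{j+1}), x − x_i^{j+1}⟩. -/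
/-!
The cubic Taylor bound for `F`, combined with the consensus errors in the gradient and Hessian at
`v = v̂_i⁰`, says that `F v + ⟨g, h⟩ + ½⟨H h, h⟩` approximates `F (v + h)` up to
`Δ₁‖h‖ + (Δ₂/2)‖h‖² + (L̄₂/6)‖h‖³` (`model_error`). Since `δ ≥ Δ₂` and `L ≥ L̄₂`, the regularized
model `F v + ν` majorizes `F` up to `Δ₁‖h‖`; evaluating this at the minimizer `x¹` and comparing
`ν x¹ ≤ ν x` bounds `F x¹` by `F x` plus error terms. The linear lower bounds in the sum are handled
by strong convexity (`strong_convex_lower`), and the weights telescope: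
`1 + ∑ α_j / A_j = 1 / A_{k-1}` (`weights_sum`).
-/

open scoped RealInnerProductSpace
open Finset

/-- One-sided third-order Taylor estimate on `[0, 1]` for a function whose second derivative grows
at most linearly away from its value at `0`. -/
lemma scalar_taylor {φ φ' φ'' : ℝ → ℝ} {C : ℝ}
    (h1 : ∀ t, HasDerivAt φ (φ' t) t) (h2 : ∀ t, HasDerivAt φ' (φ'' t) t)
    (h3 : ∀ t, 0 ≤ t → φ'' t - φ'' 0 ≤ C * t) :
    φ 1 - φ 0 - φ' 0 - φ'' 0 / 2 ≤ C / 6 := by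
  have d1 : ∀ t, HasDerivAt (fun t => φ' t - t * φ'' 0 - C / 2 * t ^ 2)
      (φ'' t - φ'' 0 - C * t) t := fun t => by
    refine (((h2 t).sub ((hasDerivAt_id t).mul_const (φ'' 0))).sub
      ((hasDerivAt_pow 2 t).const_mul (C / 2))).congr_deriv ?_
    simp; ring
  have d0 : ∀ t, HasDerivAt (fun t => φ t - t * φ' 0 - φ'' 0 / 2 * t ^ 2 - C / 6 * t ^ 3)
      (φ' t - φ' 0 - φ'' 0 * t - C / 2 * t ^ 2) t := fun t => by
    refine ((((h1 t).sub ((hasDerivAt_id t).mul_const (φ' 0))).sub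
      ((hasDerivAt_pow 2 t).const_mul (φ'' 0 / 2))).sub
      ((hasDerivAt_pow 3 t).const_mul (C / 6))).congr_deriv ?_
    simp; ring
  have a1 : AntitoneOn (fun t => φ' t - t * φ'' 0 - C / 2 * t ^ 2) (Set.Ici 0) := by
    refine antitoneOn_of_deriv_nonpos (convex_Ici 0)
      (fun t _ => (d1 t).continuousAt.continuousWithinAt)
      (fun t _ => (d1 t).differentiableAt.differentiableWithinAt) fun t ht => ?_
    rw [interior_Ici] at ht
    rw [(d1 t).deriv]
    linarith [h3 t (le_of_lt ht)]
  have a0 : AntitoneOn (fun t => φ t - t * φ' 0 - φ'' 0 / 2 * t ^ 2 - C / 6 * t ^ 3)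
      (Set.Ici 0) := by
    refine antitoneOn_of_deriv_nonpos (convex_Ici 0)
      (fun t _ => (d0 t).continuousAt.continuousWithinAt)
      (fun t _ => (d0 t).differentiableAt.differentiableWithinAt) fun t ht => ?_
    rw [interior_Ici] at ht
    rw [(d0 t).deriv]
    have := a1 (Set.mem_Ici.2 le_rfl) (Set.mem_Ici.2 (le_of_lt ht)) (le_of_lt ht)
    simp only at this
    linarith
  have := a0 (Set.mem_Ici.2 le_rfl) (Set.mem_Ici.2 zero_le_one) zero_le_one
  simp only at this
  linarith

section

variable {E : Type*} [NormedAddCommGroup E] [InnerProductSpace ℝ E] [FiniteDimensional ℝ E]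

lemma contDiff_gradient {f : E → ℝ} (hf : ContDiff ℝ 2 f) : ContDiff ℝ 1 (gradient f) := by
  have : ContDiff ℝ 1 (fderiv ℝ f) := hf.fderiv_right (by norm_num)
  exact (InnerProductSpace.toDual ℝ E).symm.contDiff.comp this

lemma hasDerivAt_line {E : Type*} [NormedAddCommGroup E] [NormedSpace ℝ E]
    (v h : E) (t : ℝ) :
    HasDerivAt (fun t : ℝ => v + t • h) h t := by
  simpa using ((hasDerivAt_id t).smul_const h).const_add v

lemma hasDerivAt_comp_line {f : E → ℝ} (hf : Differentiable ℝ f) (v h : E) (t : ℝ) :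
    HasDerivAt (fun t : ℝ => f (v + t • h)) ⟪gradient f (v + t • h), h⟫ t := by
  have := (hf (v + t • h)).hasGradientAt.hasFDerivAt.comp_hasDerivAt t (hasDerivAt_line v h t)
  exact this.congr_deriv (by simp)

/-- Cubic Taylor bound for a function with `M`-Lipschitz Hessian. -/
lemma cubic_taylor {f : E → ℝ} (hf : ContDiff ℝ 2 f) {M : ℝ}
    (hM : ∀ x y : E, ‖hess f x - hess f y‖ ≤ M * ‖x - y‖) (v h : E) :
    |f (v + h) - f v - ⟪gradient f v, h⟫ - 1 / 2 * ⟪hess f v h, h⟫| ≤ M / 6 * ‖h‖ ^ 3 := by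
  have d1 := hasDerivAt_comp_line (hf.differentiable (by norm_num)) v h
  have d2 : ∀ t : ℝ, HasDerivAt (fun t : ℝ => ⟪gradient f (v + t • h), h⟫)
      ⟪hess f (v + t • h) h, h⟫ t := fun t => by
    have := (((contDiff_gradient hf).differentiable (by norm_num))
      (v + t • h)).hasFDerivAt.comp_hasDerivAt t (hasDerivAt_line v h t)
    simpa [hess] using this.inner ℝ (hasDerivAt_const t h)
  have b : ∀ t : ℝ, 0 ≤ t → |⟪hess f (v + t • h) h, h⟫ - ⟪hess f (v + (0 : ℝ) • h) h, h⟫|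
      ≤ M * ‖h‖ ^ 3 * t := fun t ht => by
    rw [← inner_sub_left, ← _root_.sub_apply]
    calc _ ≤ ‖(hess f (v + t • h) - hess f (v + (0 : ℝ) • h)) h‖ * ‖h‖ :=
          abs_real_inner_le_norm _ _
      _ ≤ ‖hess f (v + t • h) - hess f (v + (0 : ℝ) • h)‖ * ‖h‖ * ‖h‖ := by
          gcongr; exact ContinuousLinearMap.le_opNorm _ _
      _ ≤ (M * ‖v + t • h - (v + (0 : ℝ) • h)‖) * ‖h‖ * ‖h‖ := by gcongr; exact hM _ _
      _ = M * ‖h‖ ^ 3 * t := by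
          simp [norm_smul, abs_of_nonneg ht]; ring
  have u := scalar_taylor d1 d2 fun t ht => (abs_le.1 (b t ht)).2
  have l := scalar_taylor (fun t => (d1 t).neg) (fun t => (d2 t).neg) (C := M * ‖h‖ ^ 3)
    fun t ht => by linarith [(abs_le.1 (b t ht)).1]
  simp only [one_smul, zero_smul, add_zero, Pi.neg_apply] at u l
  rw [abs_le]
  constructor <;> linarith

/-- First-order characterization of strong convexity. -/
lemma strong_convex_lower {F : E → ℝ} (hF : Differentiable ℝ F) {μ : ℝ}
    (hsc : ConvexOn ℝ Set.univ (fun x => F x - μ / 2 * ‖x‖ ^ 2)) (y x : E) :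
    F y + ⟪gradient F y, x - y⟫ + μ / 2 * ‖x - y‖ ^ 2 ≤ F x := by
  obtain ⟨h, rfl⟩ : ∃ h, x = y + h := ⟨x - y, by abel⟩
  have hc : ConvexOn ℝ Set.univ
      (fun t : ℝ => F (y + t • h) - μ / 2 * ‖y + t • h‖ ^ 2) := by
    have := hsc.comp_affineMap (AffineMap.lineMap y (y + h))
    simpa [Function.comp_def, AffineMap.lineMap_apply, add_comm] using this
  have hd : HasDerivAt (fun t : ℝ => F (y + t • h) - μ / 2 * ‖y + t • h‖ ^ 2)
      (⟪gradient F y, h⟫ - μ / 2 * (2 * ⟪y, h⟫)) 0 := by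
    have a := hasDerivAt_comp_line hF y h 0
    have b := ((hasDerivAt_line y h 0).norm_sq).const_mul (μ / 2)
    exact (a.sub b).congr_deriv (by simp)
  have := hc.le_slope_of_hasDerivAt (Set.mem_univ 0) (Set.mem_univ 1) zero_lt_one hd
  rw [slope_def_field] at this
  simp only [one_smul, zero_smul, add_zero, sub_zero, div_one] at this
  rw [norm_add_sq_real] at this
  rw [add_sub_cancel_left]
  linarith

/-- If each `G j` is `K j`-Lipschitz and the points `v j` lie within `D` of a common point, then
an approximation of the average of the `G j (v j)` with error `B` approximates the average of the
`G j (v i)` with error `B + 2 K̄ D`, where `K̄` is the mean of the `K j`. The factor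
`‖h‖` makes the claim valid also in a zero-dimensional space, where `K j` may be negative. -/
lemma average_error {E : Type*} [NormedAddCommGroup E]
    {V : Type*} [NormedAddCommGroup V] [NormedSpace ℝ V] {m : ℕ}
    (G : Fin m → E → V) (K : Fin m → ℝ)
    (hK : ∀ j (x y : E), ‖G j x - G j y‖ ≤ K j * ‖x - y‖)
    (v : Fin m → E) (c : E) (D : ℝ) (hv : ∀ j, ‖v j - c‖ ≤ D)
    (g : V) (B : ℝ) (hg : ‖g - (m : ℝ)⁻¹ • ∑ j, G j (v j)‖ ≤ B) (i : Fin m) (h : E) :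
    ‖g - (m : ℝ)⁻¹ • ∑ j, G j (v i)‖ * ‖h‖
      ≤ (B + 2 * ((m : ℝ)⁻¹ * ∑ j, K j) * D) * ‖h‖ := by
  rcases eq_or_ne h 0 with rfl | hh
  · simp
  have hK0 : ∀ j, 0 ≤ K j := fun j => by
    have h0 := (norm_nonneg _).trans (hK j h 0)
    rw [sub_zero] at h0
    exact nonneg_of_mul_nonneg_left h0 (norm_pos_iff.2 hh)
  refine mul_le_mul_of_nonneg_right ?_ (norm_nonneg h)
  have hvv : ∀ j, ‖v j - v i‖ ≤ 2 * D := fun j => by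
    have := norm_sub_le_norm_sub_add_norm_sub (v j) c (v i)
    rw [norm_sub_rev c] at this
    linarith [hv j, hv i]
  have hs : ‖(m : ℝ)⁻¹ • ∑ j, G j (v j) - (m : ℝ)⁻¹ • ∑ j, G j (v i)‖
      ≤ 2 * ((m : ℝ)⁻¹ * ∑ j, K j) * D := by
    rw [← smul_sub, ← Finset.sum_sub_distrib, norm_smul, norm_inv, RCLike.norm_natCast]
    calc _ ≤ (m : ℝ)⁻¹ * ∑ j, K j * (2 * D) := by
          gcongr
          refine (norm_sum_le _ _).trans (Finset.sum_le_sum fun j _ => (hK j _ _).trans ?_)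
          exact mul_le_mul_of_nonneg_left (hvv j) (hK0 j)
      _ = _ := by rw [← Finset.sum_mul]; ring
  linarith [norm_sub_le_norm_sub_add_norm_sub g ((m : ℝ)⁻¹ • ∑ j, G j (v j))
    ((m : ℝ)⁻¹ • ∑ j, G j (v i))]

lemma gradient_average {m : ℕ} {f : Fin m → E → ℝ} (hf : ∀ j, Differentiable ℝ (f j)) (x : E) :
    gradient (fun x => (m : ℝ)⁻¹ * ∑ j, f j x) x = (m : ℝ)⁻¹ • ∑ j, gradient (f j) x := by
  have h : HasFDerivAt (fun x => (m : ℝ)⁻¹ * ∑ j, f j x)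
      ((m : ℝ)⁻¹ • ∑ j, fderiv ℝ (f j) x) x :=
    (HasFDerivAt.fun_sum fun j _ => (hf j x).hasFDerivAt).const_mul _
  simp [gradient, h.fderiv]

lemma hess_average {m : ℕ} {f : Fin m → E → ℝ} (hf : ∀ j, ContDiff ℝ 2 (f j)) (x : E) :
    hess (fun x => (m : ℝ)⁻¹ * ∑ j, f j x) x = (m : ℝ)⁻¹ • ∑ j, hess (f j) x := by
  have hg : gradient (fun x => (m : ℝ)⁻¹ * ∑ j, f j x)
      = fun x => (m : ℝ)⁻¹ • ∑ j, gradient (f j) x :=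
    funext fun x => gradient_average (fun j => (hf j).differentiable (by norm_num)) x
  have h : HasFDerivAt (fun x => (m : ℝ)⁻¹ • ∑ j, gradient (f j) x)
      ((m : ℝ)⁻¹ • ∑ j, fderiv ℝ (gradient (f j)) x) x :=
    (HasFDerivAt.fun_sum fun j _ =>
      ((contDiff_gradient (hf j)).differentiable (by norm_num) x).hasFDerivAt).const_smul _
  rw [hess, hg, h.fderiv]
  rfl

/-- A cubic Taylor bound survives replacing the exact gradient and Hessian by approximations,
at the cost of the corresponding first- and second-order error terms. -/
lemma model_error {F : E → ℝ} (hF : ContDiff ℝ 2 F) {M : ℝ}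
    (hM : ∀ x y : E, ‖hess F x - hess F y‖ ≤ M * ‖x - y‖) (v : E) (g : E) (H : E →L[ℝ] E)
    (D1 D2 : ℝ) (h1 : ∀ h : E, ‖g - gradient F v‖ * ‖h‖ ≤ D1 * ‖h‖)
    (h2 : ∀ h : E, ‖H - hess F v‖ * ‖h‖ ≤ D2 * ‖h‖) (y : E) :
    |F y - F v - ⟪g, y - v⟫ - 1 / 2 * ⟪H (y - v), y - v⟫|
      ≤ D1 * ‖y - v‖ + D2 / 2 * ‖y - v‖ ^ 2 + M / 6 * ‖y - v‖ ^ 3 := by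
  obtain ⟨h, rfl⟩ : ∃ h, y = v + h := ⟨y - v, by abel⟩
  rw [add_sub_cancel_left]
  have t := abs_le.1 (cubic_taylor hF hM v h)
  have e1 : |⟪g, h⟫ - ⟪gradient F v, h⟫| ≤ D1 * ‖h‖ := by
    rw [← inner_sub_left]
    exact (abs_real_inner_le_norm _ _).trans (h1 h)
  have e2 : |⟪H h, h⟫ - ⟪hess F v h, h⟫| ≤ D2 * ‖h‖ ^ 2 := by
    rw [← inner_sub_left, ← _root_.sub_apply]
    calc _ ≤ ‖(H - hess F v) h‖ * ‖h‖ := abs_real_inner_le_norm _ _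
      _ ≤ ‖H - hess F v‖ * ‖h‖ * ‖h‖ := by
          gcongr; exact ContinuousLinearMap.le_opNorm _ _
      _ ≤ D2 * ‖h‖ * ‖h‖ := mul_le_mul_of_nonneg_right (h2 h) (norm_nonneg h)
      _ = _ := by ring
  have e1 := abs_le.1 e1
  have e2 := abs_le.1 e2
  rw [abs_le]
  constructor <;> linarith [t.1, t.2, e1.1, e1.2, e2.1, e2.2]

end

lemma weights_sum {α A : ℕ → ℝ} (hα : ∀ j, 0 < α j ∧ α j < 1)
    (hA : ∀ j, A j = ∏ t ∈ Finset.Icc 1 j, (1 - α t)) (n : ℕ) :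
    1 + ∑ j ∈ Finset.Icc 1 n, α j / A j = 1 / A n := by
  have hpos : ∀ j, 0 < A j := fun j => by
    rw [hA]; exact Finset.prod_pos fun t _ => by linarith [(hα t).2]
  induction n with
  | zero => simp [hA]
  | succ n ih =>
    have hs : A (n + 1) = A n * (1 - α (n + 1)) := by
      rw [hA, hA, Finset.prod_Icc_succ_top (by omega)]
    rw [Finset.sum_Icc_succ_top (by omega), ← add_assoc, ih, hs]
    have := (hpos n).ne'
    have h2 : 1 - α (n + 1) ≠ 0 := by linarith [(hα (n + 1)).2]
    field_simp
    ring

/-- **Upper bound on the accelerated estimating sequence** (Lemma 5 / acc_psi_upper). -/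
theorem acc_psi_upper
    {E : Type*} [NormedAddCommGroup E] [InnerProductSpace ℝ E] [FiniteDimensional ℝ E]
    {m : ℕ} (hm : 1 ≤ m)
    (f : Fin m → E → ℝ)
    (hC2 : ∀ i, ContDiff ℝ 2 (f i))
    (L1 L2 : Fin m → ℝ)
    (hL1 : ∀ i (x y : E), ‖gradient (f i) x - gradient (f i) y‖ ≤ L1 i * ‖x - y‖)
    (hL2 : ∀ i (x y : E), ‖hess (f i) x - hess (f i) y‖ ≤ L2 i * ‖x - y‖)
    (F : E → ℝ) (hF : F = fun x => (m : ℝ)⁻¹ * ∑ i, f i x)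
    (L1bar L2bar : ℝ)
    (hL1bar : L1bar = (m : ℝ)⁻¹ * ∑ i, L1 i)
    (hL2bar : L2bar = (m : ℝ)⁻¹ * ∑ i, L2 i)
    -- F is μ̄-strongly convex with μ̄ ≥ 0
    (μbar : ℝ) (hμbar : 0 ≤ μbar)
    (hsc : ConvexOn ℝ Set.univ (fun x => F x - μbar / 2 * ‖x‖ ^ 2))
    -- consensus data at the initialization points v̂⁰
    (vh0 : Fin m → E) (vbar0 : E) (Δv0 : ℝ)
    (hvh0 : ∀ i, ‖vh0 i - vbar0‖ ≤ Δv0)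
    (g0 : Fin m → E) (Δg0 : ℝ)
    (hg0 : ∀ i, ‖g0 i - (m : ℝ)⁻¹ • ∑ j, gradient (f j) (vh0 j)‖ ≤ Δg0)
    (H0 : Fin m → E →L[ℝ] E) (ΔH0 : ℝ)
    (hH0sym : ∀ i (v w : E), ⟪H0 i v, w⟫ = ⟪v, H0 i w⟫)
    (hH0 : ∀ i, ‖H0 i - (m : ℝ)⁻¹ • ∑ j, hess (f j) (vh0 j)‖ ≤ ΔH0)
    (Δ10 Δ20 : ℝ)
    (hΔ10 : Δ10 = Δg0 + 2 * L1bar * Δv0)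
    (hΔ20 : Δ20 = ΔH0 + 2 * L2bar * Δv0)
    -- parameters
    (L δ20 : ℝ) (hL : L2bar ≤ L) (hδ20 : Δ20 ≤ δ20)
    -- coefficients
    (k : ℕ) (hk : 1 ≤ k)
    (α : ℕ → ℝ) (hα : ∀ j, 0 < α j ∧ α j < 1)
    (A : ℕ → ℝ) (hA : ∀ j, A j = ∏ t ∈ Finset.Icc 1 j, (1 - α t))
    (κ2 κ3 : ℝ) (hκ2 : 0 ≤ κ2) (hκ3 : 0 ≤ κ3)
    -- the points x_i^{j+1} and the vectors ĝ_i(x_i^{j+1})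
    (xs : ℕ → Fin m → E) (gx : ℕ → Fin m → E)
    -- x_i^1 is a global minimizer of the initial accelerated cubic model ν̂_i^0
    (ν0 : Fin m → E → ℝ)
    (hν0 : ∀ i y, ν0 i y =
      ⟪g0 i, y - vh0 i⟫ + (1 / 2) * ⟪H0 i (y - vh0 i), y - vh0 i⟫
        + (δ20 / 2) * ‖y - vh0 i‖ ^ 2 + (L / 6) * ‖y - vh0 i‖ ^ 3)
    (hx1 : ∀ i y, ν0 i (xs 1 i) ≤ ν0 i y)
    -- the estimating function ψ_i^k in closed form
    (ψ : Fin m → E → ℝ)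
    (hψ : ∀ i x, ψ i x =
      F (xs 1 i) + (κ2 / 2) * ‖x - vh0 i‖ ^ 2 + (κ3 / 6) * ‖x - vh0 i‖ ^ 3
        + ∑ j ∈ Finset.Icc 1 (k - 1), (α j / A j) *
            (F (xs (j + 1) i) + ⟪gx (j + 1) i, x - xs (j + 1) i⟫
              + (μbar / 2) * ‖x - xs (j + 1) i‖ ^ 2))
    (i : Fin m) (x : E) :
    ψ i x
      ≤ F x / A (k - 1) + Δ10 * ‖xs 1 i - vh0 i‖ + Δ10 * ‖x - vh0 i‖
        + ((Δ20 + δ20 + κ2) / 2) * ‖x - vh0 i‖ ^ 2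
        + ((L2bar + L + κ3) / 6) * ‖x - vh0 i‖ ^ 3
        + ∑ j ∈ Finset.Icc 1 (k - 1), (α j / A j) *
            ⟪gx (j + 1) i - gradient F (xs (j + 1) i), x - xs (j + 1) i⟫ := by
  have hFC : ContDiff ℝ 2 F := by
    rw [hF]
    exact contDiff_const.mul (ContDiff.sum fun j _ => hC2 j)
  have hFH : ∀ y, hess F y = (m : ℝ)⁻¹ • ∑ j, hess (f j) y := fun y => by
    rw [hF]; exact hess_average hC2 y
  have hFg : ∀ y, gradient F y = (m : ℝ)⁻¹ • ∑ j, gradient (f j) y := fun y => by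
    rw [hF]; exact gradient_average (fun j => (hC2 j).differentiable (by norm_num)) y
  have hM : ∀ y z : E, ‖hess F y - hess F z‖ ≤ L2bar * ‖y - z‖ := fun y z => by
    rw [hFH, hFH, ← smul_sub, ← Finset.sum_sub_distrib, norm_smul, norm_inv,
      RCLike.norm_natCast, hL2bar, mul_assoc, Finset.sum_mul]
    gcongr
    exact (norm_sum_le _ _).trans (Finset.sum_le_sum fun j _ => hL2 j y z)
  have hmod := model_error hFC hM (vh0 i) (g0 i) (H0 i) Δ10 Δ20
    (fun h => by
      rw [hFg, hΔ10, hL1bar]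
      exact average_error (fun j => gradient (f j)) L1 hL1 vh0 vbar0 Δv0 hvh0 _ _ (hg0 i) i h)
    (fun h => by
      rw [hFH, hΔ20, hL2bar]
      exact average_error (fun j => hess (f j)) L2 hL2 vh0 vbar0 Δv0 hvh0 _ _ (hH0 i) i h)
  have hfirst : F (xs 1 i) ≤ F x + Δ10 * ‖xs 1 i - vh0 i‖ + Δ10 * ‖x - vh0 i‖
      + (Δ20 + δ20) / 2 * ‖x - vh0 i‖ ^ 2 + (L2bar + L) / 6 * ‖x - vh0 i‖ ^ 3 := by
    have u := (abs_le.1 (hmod (xs 1 i))).2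
    have l := (abs_le.1 (hmod x)).1
    have hmin := hx1 i x
    rw [hν0, hν0] at hmin
    have q2 : Δ20 * ‖xs 1 i - vh0 i‖ ^ 2 ≤ δ20 * ‖xs 1 i - vh0 i‖ ^ 2 := by gcongr
    have q3 : L2bar * ‖xs 1 i - vh0 i‖ ^ 3 ≤ L * ‖xs 1 i - vh0 i‖ ^ 3 := by gcongr
    linarith
  have hw : ∀ j, 0 ≤ α j / A j := fun j => by
    refine div_nonneg (hα j).1.le ?_
    rw [hA]; exact Finset.prod_nonneg fun t _ => by linarith [(hα t).2]
  have hsum : ∑ j ∈ Finset.Icc 1 (k - 1), (α j / A j) *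
            (F (xs (j + 1) i) + ⟪gx (j + 1) i, x - xs (j + 1) i⟫
              + (μbar / 2) * ‖x - xs (j + 1) i‖ ^ 2)
      ≤ (∑ j ∈ Finset.Icc 1 (k - 1), α j / A j) * F x
        + ∑ j ∈ Finset.Icc 1 (k - 1), (α j / A j) *
            ⟪gx (j + 1) i - gradient F (xs (j + 1) i), x - xs (j + 1) i⟫ := by
    rw [Finset.sum_mul, ← Finset.sum_add_distrib]
    refine Finset.sum_le_sum fun j _ => ?_
    rw [← mul_add]
    refine mul_le_mul_of_nonneg_left ?_ (hw j)
    rw [inner_sub_left]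
    linarith [strong_convex_lower (hFC.differentiable (by norm_num)) hsc (xs (j + 1) i) x]
  have hAk : F x / A (k - 1) = F x + (∑ j ∈ Finset.Icc 1 (k - 1), α j / A j) * F x := by
    rw [div_eq_mul_one_div, ← weights_sum hα hA]; ring
  rw [hψ, hAk]
  linarith
end

section
/- Lower bound of the accelerated estimating sequence (Lemma 9 / acc_psi_lower): assume f is μ̄-strongly convex with μ̄ ≥ 0, the sequences (κ_{2,j}) and (κ_{3,j}) are non-negative and non-decreasing, and fix k ≥ 1. Suppose ‖y_i^k − x*‖ ≤ R̄ and ‖y_i^{k+1} − x*‖ ≤ R̄, that y_i^k is a global minimizer of ψ_i^k, and that ψ_i^k(y_i^k) ≥ f(x_i^k)/A_{k−1} + err_i^k − r_i^k for some r_i^k ≥ 0. Let λ_k = (1/A_{k−1} − 1)·μ̄ and v_i^k = (1 − α_k)x_i^k + α_k y_i^k. Then ψ_i^{k+1}(y_i^{k+1}) ≥ f(x_i^{k+1})/A_k + (1/A_k)·⟨∇f(x_i^{k+1}), v̂_i^k − x_i^{k+1}⟩ + ((2κ_{2,k−1} + λ_k)/4)·‖y_i^{k+1} − y_i^k‖²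 + ((2κ_{3,k−1} + 3λ_k·R̄^{−1})/24)·‖y_i^{k+1} − y_i^k‖³ + (α_k/A_k)·⟨∇f(x_i^{k+1}), y_i^{k+1} − y_i^k⟩ + err_i^{k+1} − r_i^k. -/
open scoped RealInnerProductSpace
open Finset

/-!
The estimating function `ψ k` is a quadratic-plus-cubic regularizer centred at `vh0` plus a weighted
sum of `μ̄`-strongly convex quadratics whose weights telescope to `1 / A (k - 1) - 1`. Its minimizer
`y` therefore satisfies the uniform growth bound
`ψ k z ≥ ψ k y + (κ₂ + λ) / 2 * ‖z - y‖ ^ 2 + κ₃ / 12 * ‖z - y‖ ^ 3` (`psi_growth`), where the cubic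
part is the degree-three uniform convexity of `‖·‖ ^ 3` (`norm_cube_uniform_convex`).
As `y` and `z` both lie in the ball of radius `R̄` about `x*`, `‖z - y‖ ≤ 2 * R̄`, so half of the
`λ`-quadratic term dominates the `λ / R̄`-cubic term of the claim. Passing from `ψ k` to `ψ (k + 1)`
adds one nonnegative change of regularizer and one new linear model; combining this model, with
weight `α k / A k`, and the first-order inequality `F (x k) ≥ F (x (k + 1)) + ⟪∇F, x k - x (k + 1)⟫`
(`gradient_ineq`), with weight `1 / A (k - 1) = (1 - α k) / A k`, yields the bound.
-/

/-- First-order characterization of convexity, obtained by restricting `F` to the line through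
`x` and `y`. -/
lemma gradient_ineq {E : Type*} [NormedAddCommGroup E] [InnerProductSpace ℝ E] [CompleteSpace E]
    {F : E → ℝ} (hconv : ConvexOn ℝ Set.univ F) (x y : E) (hd : DifferentiableAt ℝ F x) :
    F x + ⟪gradient F x, y - x⟫ ≤ F y := by
  have hline : ConvexOn ℝ Set.univ (fun t : ℝ => F (AffineMap.lineMap x y t)) := by
    exact hconv.comp_affineMap (AffineMap.lineMap x y : ℝ →ᵃ[ℝ] E)
  have h0 : HasDerivAt (fun t : ℝ => F (AffineMap.lineMap x y t)) ⟪gradient F x, y - x⟫ 0 := by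
    have h1 : HasFDerivAt F (InnerProductSpace.toDual ℝ E (gradient F x))
        (AffineMap.lineMap x y (0 : ℝ)) := by
      simpa using hd.hasGradientAt.hasFDerivAt
    have h2 : HasDerivAt (fun t : ℝ => AffineMap.lineMap x y t) (y - x) (0 : ℝ) :=
      AffineMap.hasDerivAt_lineMap
    exact h1.comp_hasDerivAt (0 : ℝ) h2
  have := hline.le_slope_of_hasDerivAt (Set.mem_univ 0) (Set.mem_univ 1) one_pos h0
  simp only [slope_def_field, AffineMap.lineMap_apply_one, AffineMap.lineMap_apply_zero, sub_zero,
    div_one] at this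
  linarith

/-- Uniform convexity of degree three of the cubed norm, whose gradient at `a` is `3‖a‖ a`. -/
lemma norm_cube_uniform_convex {E : Type*} [NormedAddCommGroup E] [InnerProductSpace ℝ E]
    (a h : E) :
    ‖a‖ ^ 3 + 3 * ‖a‖ * ⟪a, h⟫ + ‖h‖ ^ 3 / 2 ≤ ‖a + h‖ ^ 3 := by
  have hsq := norm_add_sq_real a h
  have hd : ‖h‖ ≤ ‖a + h‖ + ‖a‖ := by
    simpa using norm_sub_le (a + h) a
  have hp := norm_nonneg a
  have hq := norm_nonneg (a + h)
  have hd0 := norm_nonneg h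
  generalize ‖a‖ = p at *
  generalize ‖a + h‖ = q at *
  generalize ‖h‖ = d at *
  have hin : ⟪a, h⟫ = (q ^ 2 - p ^ 2 - d ^ 2) / 2 := by linarith
  rw [hin]
  -- after eliminating the inner product, the claim only involves `p = ‖a‖`, `q = ‖a + h‖`, `d = ‖h‖`
  suffices H : d ^ 3 / 2 ≤ (q - p) ^ 2 * (q + p / 2) + 3 / 2 * p * d ^ 2 by linarith
  rcases le_total d (3 * p) with h3 | h3
  · have : 0 ≤ (q - p) ^ 2 * (q + p / 2) := by positivity
    nlinarith [mul_le_mul_of_nonneg_right h3 (sq_nonneg d)]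
  · have h1 : (d - 2 * p) ^ 2 * (d - p / 2) ≤ (q - p) ^ 2 * (q + p / 2) := by
      have h4 : (d - 2 * p) ^ 2 ≤ (q - p) ^ 2 := by
        apply pow_le_pow_left₀ <;> linarith
      exact mul_le_mul h4 (by linarith) (by linarith) (sq_nonneg _)
    have h5 : 0 ≤ p ^ 2 * (d - 3 * p) := mul_nonneg (sq_nonneg p) (by linarith)
    -- with `2 * p ^ 3 ≤ (2 / 3) * p ^ 2 * d` the remainder is `d` times a definite quadratic form
    have h6 : 0 ≤ d * (d ^ 2 / 2 - 3 * p * d + 16 / 3 * p ^ 2) :=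
      mul_nonneg hd0 (by nlinarith [sq_nonneg (p - 9 / 32 * d), sq_nonneg d])
    nlinarith

/-- Second-order upper bound for the cubed norm along a ray, near its start. -/
lemma norm_cube_upper {E : Type*} [NormedAddCommGroup E] [InnerProductSpace ℝ E]
    (a h : E) {t : ℝ} (ht0 : 0 ≤ t) (ht1 : t ≤ 1) :
    ‖a + t • h‖ ^ 3 ≤ ‖a‖ ^ 3 + t * (3 * ‖a‖ * ⟪a, h⟫)
      + t ^ 2 * (‖h‖ ^ 2 * (3 * ‖a‖ + ‖h‖)) := by
  have hsq := norm_add_sq_real a (t • h)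
  have hu : ‖a + t • h‖ ≤ ‖a‖ + ‖t • h‖ := norm_add_le _ _
  have hl : ‖a‖ ≤ ‖a + t • h‖ + ‖t • h‖ := by
    simpa using norm_sub_le (a + t • h) (t • h)
  rw [norm_smul, Real.norm_of_nonneg ht0] at hsq hu hl
  rw [inner_smul_right] at hsq
  have hp := norm_nonneg a
  have hq := norm_nonneg (a + t • h)
  have hd0 := norm_nonneg h
  generalize ‖a‖ = p at *
  generalize ‖a + t • h‖ = q at *
  generalize ‖h‖ = d at *
  have hin : t * ⟪a, h⟫ = (q ^ 2 - p ^ 2 - (t * d) ^ 2) / 2 := by linarith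
  have h1 : (q - p) ^ 2 ≤ (t * d) ^ 2 := by
    apply sq_le_sq' <;> linarith
  have h2 : t * d ≤ d := mul_le_of_le_one_left hd0 ht1
  have h3 : (q - p) ^ 2 * (q + p / 2) ≤ (t * d) ^ 2 * (3 / 2 * p + d) :=
    mul_le_mul h1 (by linarith) (by linarith) (sq_nonneg _)
  have e1 : t * (3 * p * ⟪a, h⟫) = 3 * p * (t * ⟪a, h⟫) := by ring
  rw [e1, hin]
  linarith

/-- Uniform growth of a sum of a quadratic and a cubic regularizer and weighted quadratics away
from its minimizer `y`. -/
lemma psi_growth {E : Type*} [NormedAddCommGroup E] [InnerProductSpace ℝ E]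
    (s : Finset ℕ) (c b : ℕ → ℝ) (g p : ℕ → E) (C μ κ2 κ3 : ℝ) (hκ3 : 0 ≤ κ3) (v y z : E)
    (φ : E → ℝ)
    (hφ : ∀ x, φ x = C + (κ2 / 2) * ‖x - v‖ ^ 2 + (κ3 / 6) * ‖x - v‖ ^ 3
      + ∑ j ∈ s, c j * (b j + ⟪g j, x - p j⟫ + (μ / 2) * ‖x - p j‖ ^ 2))
    (hmin : ∀ x, φ y ≤ φ x) :
    φ y + (κ2 + (∑ j ∈ s, c j) * μ) / 2 * ‖z - y‖ ^ 2 + κ3 / 12 * ‖z - y‖ ^ 3 ≤ φ z := by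
  obtain ⟨h, rfl⟩ : ∃ h, z = y + h := ⟨z - y, by simp⟩
  obtain ⟨a, ha⟩ : ∃ a, a = y - v := ⟨_, rfl⟩
  rw [add_sub_cancel_left]
  have hsum (t : ℝ) :
      ∑ j ∈ s, c j * (b j + ⟪g j, y + t • h - p j⟫ + (μ / 2) * ‖y + t • h - p j‖ ^ 2)
        = ∑ j ∈ s, c j * (b j + ⟪g j, y - p j⟫ + (μ / 2) * ‖y - p j‖ ^ 2)
          + t * (∑ j ∈ s, c j * (⟪g j, h⟫ + μ * ⟪y - p j, h⟫))
          + t ^ 2 * (μ / 2 * ‖h‖ ^ 2 * ∑ j ∈ s, c j) := by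
    simp only [Finset.mul_sum, ← Finset.sum_add_distrib]
    refine Finset.sum_congr rfl fun j _ => ?_
    rw [add_sub_right_comm, norm_add_sq_real, inner_add_right, inner_smul_right, inner_smul_right,
      norm_smul, mul_pow, Real.norm_eq_abs, sq_abs]
    ring
  have hnsq (t : ℝ) : ‖y + t • h - v‖ ^ 2 = ‖a‖ ^ 2 + t * (2 * ⟪a, h⟫) + t ^ 2 * ‖h‖ ^ 2 := by
    rw [add_sub_right_comm, ← ha, norm_add_sq_real, inner_smul_right, norm_smul, mul_pow,
      Real.norm_eq_abs, sq_abs]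
    ring
  -- `L` is the directional derivative of `φ` at `y` along `h`
  obtain ⟨L, hL⟩ : ∃ L, L = κ2 * ⟪a, h⟫ + κ3 / 2 * (‖a‖ * ⟪a, h⟫)
      + ∑ j ∈ s, c j * (⟪g j, h⟫ + μ * ⟪y - p j, h⟫) := ⟨_, rfl⟩
  obtain ⟨K, hK⟩ : ∃ K, K = κ2 / 2 * ‖h‖ ^ 2 + κ3 / 6 * (‖h‖ ^ 2 * (3 * ‖a‖ + ‖h‖))
      + μ / 2 * ‖h‖ ^ 2 * ∑ j ∈ s, c j := ⟨_, rfl⟩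
  have hLnn : 0 ≤ L := by
    have hbound (t : ℝ) (ht0 : 0 < t) (ht1 : t ≤ 1) : 0 ≤ L + t * K := by
      have h1 := hmin (y + t • h)
      rw [hφ, hφ (y + t • h), hsum, hnsq, add_sub_right_comm, ← ha] at h1
      have h2 := mul_le_mul_of_nonneg_left (norm_cube_upper a h ht0.le ht1)
        (show 0 ≤ κ3 / 6 by positivity)
      have h3 : 0 ≤ t * (L + t * K) := by
        rw [hL, hK]
        linarith
      exact nonneg_of_mul_nonneg_right h3 ht0
    have hlim : Filter.Tendsto (fun t : ℝ => L + t * K) (nhdsWithin 0 (Set.Ioi 0)) (nhds L) := by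
      have : Continuous (fun t : ℝ => L + t * K) := by fun_prop
      simpa using (this.tendsto 0).mono_left nhdsWithin_le_nhds
    refine ge_of_tendsto hlim ?_
    filter_upwards [Ioc_mem_nhdsGT (zero_lt_one' ℝ)] with t ht
    exact hbound t ht.1 ht.2
  have e1 := hsum 1
  have e2 := hnsq 1
  rw [one_smul] at e1 e2
  have h4 := mul_le_mul_of_nonneg_left (norm_cube_uniform_convex a h)
    (show 0 ≤ κ3 / 6 by positivity)
  rw [hφ, hφ (y + h), e1, e2, add_sub_right_comm, ← ha]
  linarith

/-- **Lower bound of the accelerated estimating sequence** (Lemma 9 / acc_psi_lower),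
stated for a fixed node `i` (the node index is suppressed). -/
theorem acc_psi_lower
    {E : Type*} [NormedAddCommGroup E] [InnerProductSpace ℝ E] [FiniteDimensional ℝ E]
    {m : ℕ} (hm : 1 ≤ m)
    (f : Fin m → E → ℝ)
    (hC2 : ∀ i, ContDiff ℝ 2 (f i))
    (F : E → ℝ) (hF : F = fun x => (m : ℝ)⁻¹ * ∑ i, f i x)
    -- F is μ̄-strongly convex with μ̄ ≥ 0
    (μbar : ℝ) (hμbar : 0 ≤ μbar)
    (hsc : ConvexOn ℝ Set.univ (fun x => F x - μbar / 2 * ‖x‖ ^ 2))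
    -- the global minimizer of F and the radius
    (xstar : E) (hstar : ∀ y, F xstar ≤ F y)
    (Rbar : ℝ) (hRbar : 0 < Rbar)
    -- coefficients
    (α : ℕ → ℝ) (hα : ∀ j, 0 < α j ∧ α j < 1)
    (A : ℕ → ℝ) (hA : ∀ j, A j = ∏ t ∈ Finset.Icc 1 j, (1 - α t))
    -- the κ-sequences are non-negative and non-decreasing
    (κ2 κ3 : ℕ → ℝ)
    (hκ2nn : ∀ j, 0 ≤ κ2 j) (hκ3nn : ∀ j, 0 ≤ κ3 j)
    (hκ2mono : Monotone κ2) (hκ3mono : Monotone κ3)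
    -- the data of node i: initialization, iterates, inexact gradients, auxiliary points
    (vh0 : E) (xs : ℕ → E) (gx : ℕ → E) (ys : ℕ → E) (vs : ℕ → E) (vhs : ℕ → E)
    -- the estimating functions in closed form
    (ψ : ℕ → E → ℝ)
    (hψ : ∀ n (x : E), ψ n x =
      F (xs 1) + (κ2 (n - 1) / 2) * ‖x - vh0‖ ^ 2 + (κ3 (n - 1) / 6) * ‖x - vh0‖ ^ 3
        + ∑ j ∈ Finset.Icc 1 (n - 1), (α j / A j) *
            (F (xs (j + 1)) + ⟪gx (j + 1), x - xs (j + 1)⟫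
              + (μbar / 2) * ‖x - xs (j + 1)‖ ^ 2))
    -- the error terms
    (err : ℕ → ℝ)
    (herr : ∀ n, err n =
      (∑ j ∈ Finset.Icc 1 (n - 1), (α j / A j) *
          ⟪gx (j + 1) - gradient F (xs (j + 1)), ys (j + 1) - xs (j + 1)⟫)
        + ∑ j ∈ Finset.Icc 1 (n - 1), (1 / A j) *
            ⟪gradient F (xs (j + 1)), vs j - vhs j⟫)
    -- the fixed iteration index and its hypotheses
    (k : ℕ) (hk : 1 ≤ k)
    (hyk : ‖ys k - xstar‖ ≤ Rbar)
    (hyk1 : ‖ys (k + 1) - xstar‖ ≤ Rbar)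
    (hymin : ∀ x, ψ k (ys k) ≤ ψ k x)
    (r : ℝ) (hr : 0 ≤ r)
    (hlow : F (xs k) / A (k - 1) + err k - r ≤ ψ k (ys k))
    (lam : ℝ) (hlam : lam = (1 / A (k - 1) - 1) * μbar)
    (hvk : vs k = (1 - α k) • xs k + α k • ys k) :
    F (xs (k + 1)) / A k
        + (1 / A k) * ⟪gradient F (xs (k + 1)), vhs k - xs (k + 1)⟫
        + ((2 * κ2 (k - 1) + lam) / 4) * ‖ys (k + 1) - ys k‖ ^ 2
        + ((2 * κ3 (k - 1) + 3 * lam / Rbar) / 24) * ‖ys (k + 1) - ys k‖ ^ 3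
        + (α k / A k) * ⟪gradient F (xs (k + 1)), ys (k + 1) - ys k⟫
        + err (k + 1) - r
      ≤ ψ (k + 1) (ys (k + 1)) := by
  obtain ⟨n, rfl⟩ : ∃ n, k = n + 1 := ⟨k - 1, by omega⟩
  simp only [Nat.add_sub_cancel] at *
  have hApos (j : ℕ) : 0 < A j := by
    rw [hA]
    exact Finset.prod_pos fun t _ => by linarith [(hα t).2]
  have hAsucc (j : ℕ) : A (j + 1) = A j * (1 - α (j + 1)) := by
    rw [hA, hA, Finset.prod_Icc_succ_top (by omega)]
  have hstep (j : ℕ) : 1 / A j = (1 - α (j + 1)) / A (j + 1) := by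
    have h1 := (hApos j).ne'
    have h2 : 1 - α (j + 1) ≠ 0 := by linarith [(hα (j + 1)).2]
    rw [hAsucc]
    field_simp
  have htel (j : ℕ) : ∑ i ∈ Finset.Icc 1 j, α i / A i = 1 / A j - 1 := by
    induction j with
    | zero => simp [hA]
    | succ j ih =>
      rw [Finset.sum_Icc_succ_top (by omega), ih, hstep]
      ring
  have hlam0 : 0 ≤ lam := by
    rw [hlam, ← htel]
    exact mul_nonneg
      (Finset.sum_nonneg fun i _ => div_nonneg (hα i).1.le (hApos i).le) hμbar
  have hFd : Differentiable ℝ F := by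
    have (i : Fin m) : Differentiable ℝ (f i) := (hC2 i).differentiable (by norm_num)
    rw [hF]
    fun_prop
  have hFconv : ConvexOn ℝ Set.univ F := by
    have h1 : ConvexOn ℝ Set.univ (fun x : E => μbar / 2 * ‖x‖ ^ 2) :=
      ((convexOn_norm convex_univ).pow (fun _ _ => norm_nonneg _) 2).smul
        (show 0 ≤ μbar / 2 by positivity)
    have h2 := hsc.add h1
    have h3 : ((fun x => F x - μbar / 2 * ‖x‖ ^ 2) + fun x : E => μbar / 2 * ‖x‖ ^ 2) = F := by
      ext x
      simp
    rwa [h3] at h2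
  have hgrad := gradient_ineq hFconv (xs (n + 1 + 1)) (xs (n + 1)) (hFd _)
  have hgrow := psi_growth (Finset.Icc 1 n) (fun j => α j / A j) (fun j => F (xs (j + 1)))
    (fun j => gx (j + 1)) (fun j => xs (j + 1)) (F (xs 1)) μbar (κ2 n) (κ3 n) (hκ3nn n) vh0
    (ys (n + 1)) (ys (n + 1 + 1)) (ψ (n + 1)) (fun x => by rw [hψ, Nat.add_sub_cancel]) hymin
  rw [htel, ← hlam] at hgrow
  have hψsucc : ψ (n + 1) (ys (n + 1 + 1)) + α (n + 1) / A (n + 1) *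
      (F (xs (n + 1 + 1)) + ⟪gx (n + 1 + 1), ys (n + 1 + 1) - xs (n + 1 + 1)⟫)
      ≤ ψ (n + 1 + 1) (ys (n + 1 + 1)) := by
    rw [hψ, hψ (n + 1 + 1), Nat.add_sub_cancel, Nat.add_sub_cancel,
      Finset.sum_Icc_succ_top (by omega)]
    have h2 := mul_le_mul_of_nonneg_right (hκ2mono n.le_succ)
      (sq_nonneg ‖ys (n + 1 + 1) - vh0‖)
    have h3 := mul_le_mul_of_nonneg_right (hκ3mono n.le_succ)
      (pow_nonneg (norm_nonneg (ys (n + 1 + 1) - vh0)) 3)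
    have h4 : 0 ≤ α (n + 1) / A (n + 1) *
        (μbar / 2 * ‖ys (n + 1 + 1) - xs (n + 1 + 1)‖ ^ 2) :=
      mul_nonneg (div_nonneg (hα _).1.le (hApos _).le) (by positivity)
    simp only [Nat.succ_eq_add_one] at h2 h3
    linarith
  have herrsucc : err (n + 1 + 1) = err (n + 1)
      + α (n + 1) / A (n + 1) * ⟪gx (n + 1 + 1) - gradient F (xs (n + 1 + 1)),
          ys (n + 1 + 1) - xs (n + 1 + 1)⟫
      + 1 / A (n + 1) * ⟪gradient F (xs (n + 1 + 1)), vs (n + 1) - vhs (n + 1)⟫ := by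
    rw [herr, herr (n + 1), Nat.add_sub_cancel, Nat.add_sub_cancel,
      Finset.sum_Icc_succ_top (by omega), Finset.sum_Icc_succ_top (by omega)]
    ring
  have hD : ‖ys (n + 1 + 1) - ys (n + 1)‖ ≤ 2 * Rbar := by
    have := norm_sub_le (ys (n + 1 + 1) - xstar) (ys (n + 1) - xstar)
    rw [sub_sub_sub_cancel_right] at this
    linarith
  have hcube : lam / Rbar * ‖ys (n + 1 + 1) - ys (n + 1)‖ ^ 3
      ≤ 2 * lam * ‖ys (n + 1 + 1) - ys (n + 1)‖ ^ 2 := by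
    rw [div_mul_eq_mul_div, div_le_iff₀ hRbar]
    have := mul_le_mul_of_nonneg_left hD
      (mul_nonneg hlam0 (sq_nonneg ‖ys (n + 1 + 1) - ys (n + 1)‖))
    linarith
  have hgrad' := mul_le_mul_of_nonneg_left hgrad (one_div_pos.2 (hApos n)).le
  rw [hstep] at hgrad'
  have hlow' : (1 - α (n + 1)) / A (n + 1) * F (xs (n + 1)) + err (n + 1) - r
      ≤ ψ (n + 1) (ys (n + 1)) := by
    rw [← hstep]
    linarith [hlow, one_div_mul_eq_div (A n) (F (xs (n + 1)))]
  rw [herrsucc, hvk]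
  simp only [inner_sub_left, inner_sub_right, inner_add_right, inner_smul_right] at hgrad' hψsucc ⊢
  linear_combination hgrow + hψsucc + hgrad' + hlow' + hcube / 8
end

section
/- Consensus-on-v error bound (Lemma 12 / err_v): suppose ∇f is L̄₁-Lipschitz, the consensus routine preserves averages, i.e. Σ_{i=1}^m v̂_i = Σ_{i=1}^m v_i, and let x_1,…,x_m ∈ ℝ^d with Δ^raw = max_{i,j} ‖x_i − x_j‖. Then (1/m)·Σ_{i=1}^m ⟨∇f(x_i), v̂_i − v_i⟩ ≤ (L̄₁·Δ^raw/m)·Σ_{i=1}^m ‖v̂_i − v_i‖. -/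
/-!
The differences `vh i - v i` sum to zero, so each `∇F (X i)` may be replaced by
`∇F (X i) - ∇F (X i₀)` for a fixed index `i₀`. Cauchy–Schwarz and the Lipschitz bound
`‖∇F (X i) - ∇F (X i₀)‖ ≤ L1bar * Δraw` then bound the sum term by term.
-/

open scoped RealInnerProductSpace
open Finset

/-- **Consensus-on-v error bound** (Lemma 12 / err_v). -/
theorem err_v_bound
    {E : Type*} [NormedAddCommGroup E] [InnerProductSpace ℝ E] [FiniteDimensional ℝ E]
    {m : ℕ} (hm : 1 ≤ m)
    (f : Fin m → E → ℝ)
    (hC1 : ∀ i, ContDiff ℝ 1 (f i))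
    (L1 : Fin m → ℝ)
    (hL1 : ∀ i (x y : E), ‖gradient (f i) x - gradient (f i) y‖ ≤ L1 i * ‖x - y‖)
    (F : E → ℝ) (hF : F = fun x => (m : ℝ)⁻¹ * ∑ i, f i x)
    (L1bar : ℝ) (hL1bar : L1bar = (m : ℝ)⁻¹ * ∑ i, L1 i)
    -- ∇F is L̄₁-Lipschitz
    (hFlip : ∀ x y : E, ‖gradient F x - gradient F y‖ ≤ L1bar * ‖x - y‖)
    -- the consensus routine preserves averages
    (v vh : Fin m → E)
    (hpres : ∑ i, vh i = ∑ i, v i)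
    -- the points and their raw disagreement
    (X : Fin m → E) (Δraw : ℝ)
    (hraw : IsGreatest {r : ℝ | ∃ i j, r = ‖X i - X j‖} Δraw) :
    (m : ℝ)⁻¹ * ∑ i, ⟪gradient F (X i), vh i - v i⟫
      ≤ L1bar * Δraw / (m : ℝ) * ∑ i, ‖vh i - v i‖ := by
  have hΔ : ∀ i j, ‖X i - X j‖ ≤ Δraw := fun i j => hraw.2 ⟨i, j, rfl⟩
  let i₀ : Fin m := ⟨0, hm⟩
  -- `L1bar` carries no sign hypothesis: if it is negative, the Lipschitz bound forces `E` to be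
  -- trivial, and then both sides vanish.
  have hgrad : ∀ i, ‖gradient F (X i) - gradient F (X i₀)‖ ≤ L1bar * Δraw := by
    intro i
    rcases le_or_gt 0 L1bar with hL | hL
    · exact (hFlip _ _).trans (mul_le_mul_of_nonneg_left (hΔ i i₀) hL)
    · obtain ⟨⟨j, k, hjk⟩, -⟩ := hraw
      have hsub : ∀ x y : E, ‖x - y‖ = 0 := fun x y => by
        nlinarith [norm_nonneg (x - y), (norm_nonneg _).trans (hFlip x y)]
      rw [hjk, hsub, hsub, mul_zero]
  -- Average preservation allows subtracting the gradient at a common reference point.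
  have hzero : ∑ i, ⟪gradient F (X i₀), vh i - v i⟫ = 0 := by
    rw [← inner_sum, Finset.sum_sub_distrib, hpres, sub_self, inner_zero_right]
  have hsum : ∑ i, ⟪gradient F (X i), vh i - v i⟫ ≤ L1bar * Δraw * ∑ i, ‖vh i - v i‖ := by
    calc ∑ i, ⟪gradient F (X i), vh i - v i⟫
        = ∑ i, ⟪gradient F (X i) - gradient F (X i₀), vh i - v i⟫ := by
          simp only [inner_sub_left (gradient F (X _)) (gradient F (X i₀)),
            Finset.sum_sub_distrib, hzero, sub_zero]
      _ ≤ ∑ i, L1bar * Δraw * ‖vh i - v i‖ := Finset.sum_le_sum fun i _ =>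
          (real_inner_le_norm _ _).trans
            (mul_le_mul_of_nonneg_right (hgrad i) (norm_nonneg _))
      _ = L1bar * Δraw * ∑ i, ‖vh i - v i‖ := by rw [Finset.mul_sum]
  calc (m : ℝ)⁻¹ * ∑ i, ⟪gradient F (X i), vh i - v i⟫
      ≤ (m : ℝ)⁻¹ * (L1bar * Δraw * ∑ i, ‖vh i - v i‖) :=
        mul_le_mul_of_nonneg_left hsum (by positivity)
    _ = L1bar * Δraw / (m : ℝ) * ∑ i, ‖vh i - v i‖ := by ring
end

section
/- Raw disagreement after the accelerated cubic step (Lemma 14 / raw_dissimilarity): assume each f_i is μ_i-strongly convex with μ̂ = min_i μ_i > 0, and assume each Ĥ_i satisfies Ĥ_i ⪰ μ̂·I (which holds when Ĥ_i is a convex combination of local Hessians). Let x_i⁺ be a global minimizer of ν̂_i for each i. Then max_{i,ℓ} ‖x_i⁺ − x_ℓ⁺‖ ≤ (1/(μ̂ + δ₂))·( 2Δ̂_H·max_{ℓ} ‖x_ℓ⁺ − v̂_ℓ‖ + 2Δ̂_g ) + 2Δ̂_v. -/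
/-!
In the step variables `s i = xp i - vh i`, minimality gives the stationarity equation
`g i + H i (s i) + δ2 • s i + (L / 2) * ‖s i‖ • s i = 0` (`cubic_model_stationary`).
Subtract the equations for `i` and `l` and pair with `d = s i - s l`: the cubic part is monotone
(`inner_norm_smul_sub_nonneg`), the quadratic part is at least `(μhat + δ2) * ‖d‖ ^ 2`, and the rest
is bounded by `(2 * ΔH * ‖s l‖ + 2 * Δg) * ‖d‖`, since the data of `i` and `l` both lie close to
the same average. Dividing by `‖d‖` bounds `‖s i - s l‖`; passing from steps to points adds
`‖vh i - vh l‖ ≤ 2 * Δv`.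
-/

open scoped RealInnerProductSpace
open Finset

/-- First-order optimality for the cubic model, in the step variable and paired with an arbitrary
direction. -/
lemma cubic_model_stationary {E : Type*} [NormedAddCommGroup E] [InnerProductSpace ℝ E]
    (g : E) (H : E →L[ℝ] E) (hHsym : ∀ v w : E, ⟪H v, w⟫ = ⟪v, H w⟫) (δ L : ℝ) (s : E)
    (hmin : ∀ y : E,
      ⟪g, s⟫ + (1 / 2) * ⟪H s, s⟫ + (δ / 2) * ‖s‖ ^ 2 + (L / 6) * ‖s‖ ^ 3
        ≤ ⟪g, y⟫ + (1 / 2) * ⟪H y, y⟫ + (δ / 2) * ‖y‖ ^ 2 + (L / 6) * ‖y‖ ^ 3) (d : E) :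
    ⟪g, d⟫ + ⟪H s, d⟫ + δ * ⟪s, d⟫ + L / 2 * (‖s‖ * ⟪s, d⟫) = 0 := by
  have h1 : HasFDerivAt (fun y : E => ⟪g, y⟫) (innerSL ℝ g) s := (innerSL ℝ g).hasFDerivAt
  have h2 := (H.hasFDerivAt (x := s)).inner ℝ (hasFDerivAt_id (𝕜 := ℝ) s)
  have h3 := (hasStrictFDerivAt_norm_sq s).hasFDerivAt
  have h4 : HasFDerivAt (fun y : E => ‖y‖ ^ 3) ((3 * ‖s‖) • innerSL ℝ s) s := by
    have h := hasFDerivAt_norm_rpow s (p := 3) (by norm_num)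
    norm_num at h
    exact_mod_cast h
  have h5 := ((h1.add (h2.const_mul (1 / 2))).add (h3.const_mul (δ / 2))).add
    (h4.const_mul (L / 6))
  have h6 := congrArg (fun T => T d)
    (IsLocalMin.hasFDerivAt_eq_zero (Filter.Eventually.of_forall hmin) h5)
  simp at h6
  rw [hHsym d s, real_inner_comm (H s) d] at h6
  linarith

/-- The gradient `s ↦ ‖s‖ • s` of `‖s‖ ^ 3 / 3` is monotone. -/
lemma inner_norm_smul_sub_nonneg {E : Type*} [NormedAddCommGroup E] [InnerProductSpace ℝ E]
    (a b : E) : 0 ≤ ‖a‖ * ⟪a, a - b⟫ - ‖b‖ * ⟪b, a - b⟫ := by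
  have h := real_inner_le_norm a b
  rw [inner_sub_right, inner_sub_right, real_inner_self_eq_norm_sq, real_inner_self_eq_norm_sq,
    real_inner_comm a b]
  have ha := norm_nonneg a
  have hb := norm_nonneg b
  -- By Cauchy–Schwarz the expression is at least `(‖a‖ + ‖b‖) * (‖a‖ - ‖b‖) ^ 2`.
  nlinarith [mul_nonneg (add_nonneg ha hb) (sub_nonneg.2 h),
    mul_nonneg (add_nonneg ha hb) (sq_nonneg (‖a‖ - ‖b‖))]

/-- **Raw disagreement after the accelerated cubic step** (Lemma 14 / raw_dissimilarity). -/
theorem raw_dissimilarity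
    {E : Type*} [NormedAddCommGroup E] [InnerProductSpace ℝ E] [FiniteDimensional ℝ E]
    {m : ℕ} (hm : 1 ≤ m)
    (f : Fin m → E → ℝ)
    (hC2 : ∀ i, ContDiff ℝ 2 (f i))
    (F : E → ℝ) (hF : F = fun x => (m : ℝ)⁻¹ * ∑ i, f i x)
    -- each f_i is μ_i-strongly convex with μ̂ = min_i μ_i > 0
    (μ : Fin m → ℝ)
    (hsc : ∀ i, ConvexOn ℝ Set.univ (fun x => f i x - μ i / 2 * ‖x‖ ^ 2))
    (μhat : ℝ) (hμhat : IsLeast (Set.range μ) μhat) (hμpos : 0 < μhat)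
    -- consensus data at the points v̂
    (vh : Fin m → E) (vbar : E) (Δv : ℝ)
    (hvh : ∀ i, ‖vh i - vbar‖ ≤ Δv)
    (g : Fin m → E) (Δg : ℝ)
    (hg : ∀ i, ‖g i - (m : ℝ)⁻¹ • ∑ j, gradient (f j) (vh j)‖ ≤ Δg)
    (H : Fin m → E →L[ℝ] E) (ΔH : ℝ)
    (hHsym : ∀ i (v w : E), ⟪H i v, w⟫ = ⟪v, H i w⟫)
    (hH : ∀ i, ‖H i - (m : ℝ)⁻¹ • ∑ j, hess (f j) (vh j)‖ ≤ ΔH)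
    -- each Ĥ_i ⪰ μ̂·I
    (hHpd : ∀ i (v : E), μhat * ‖v‖ ^ 2 ≤ ⟪H i v, v⟫)
    -- model parameters and the minimizers of the accelerated cubic model
    (δ2 L : ℝ) (hδ2 : 0 ≤ δ2) (hLpos : 0 < L)
    (ν : Fin m → E → ℝ)
    (hν : ∀ i y, ν i y =
      ⟪g i, y - vh i⟫ + (1 / 2) * ⟪H i (y - vh i), y - vh i⟫
        + (δ2 / 2) * ‖y - vh i‖ ^ 2 + (L / 6) * ‖y - vh i‖ ^ 3)
    (xp : Fin m → E)
    (hmin : ∀ i y, ν i (xp i) ≤ ν i y) :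
    ∀ i l, ‖xp i - xp l‖
      ≤ (1 / (μhat + δ2)) * (2 * ΔH *
            (Finset.univ.sup' (Finset.univ_nonempty_iff.mpr (Fin.pos_iff_nonempty.mp hm))
              fun l' => ‖xp l' - vh l'‖) + 2 * Δg) + 2 * Δv := by
  intro i l
  have hstat : ∀ k (d : E), ⟪g k, d⟫ + ⟪H k (xp k - vh k), d⟫ + δ2 * ⟪xp k - vh k, d⟫
      + L / 2 * (‖xp k - vh k‖ * ⟪xp k - vh k, d⟫) = 0 := by
    intro k
    refine cubic_model_stationary (g k) (H k) (hHsym k) δ2 L _ fun y => ?_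
    have h := hmin k (y + vh k)
    rw [hν, hν] at h
    simpa only [add_sub_cancel_right] using h
  have hsup := Finset.le_sup' (fun l' => ‖xp l' - vh l'‖) (Finset.mem_univ l)
  set M := Finset.univ.sup' (Finset.univ_nonempty_iff.mpr (Fin.pos_iff_nonempty.mp hm))
    fun l' => ‖xp l' - vh l'‖
  have hΔH : 0 ≤ ΔH := (norm_nonneg _).trans (hH i)
  have hgd : ‖g l - g i‖ ≤ 2 * Δg := by
    have h := norm_sub_le_norm_sub_add_norm_sub (g l)
      ((m : ℝ)⁻¹ • ∑ j, gradient (f j) (vh j)) (g i)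
    rw [norm_sub_rev (_ • _) (g i)] at h
    linarith [hg i, hg l]
  have hHd : ‖H l - H i‖ ≤ 2 * ΔH := by
    have h := norm_sub_le_norm_sub_add_norm_sub (H l)
      ((m : ℝ)⁻¹ • ∑ j, hess (f j) (vh j)) (H i)
    rw [norm_sub_rev (_ • _) (H i)] at h
    linarith [hH i, hH l]
  have hvd : ‖vh i - vh l‖ ≤ 2 * Δv := by
    have h := norm_sub_le_norm_sub_add_norm_sub (vh i) vbar (vh l)
    rw [norm_sub_rev vbar (vh l)] at h
    linarith [hvh i, hvh l]
  have hxs : xp i - xp l = ((xp i - vh i) - (xp l - vh l)) + (vh i - vh l) := by abel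
  have hia := hstat i ((xp i - vh i) - (xp l - vh l))
  have hlb := hstat l ((xp i - vh i) - (xp l - vh l))
  generalize xp i - vh i = a at hia hlb hxs
  generalize xp l - vh l = b at hia hlb hxs hsup
  have hmono := mul_nonneg (half_pos hLpos).le (inner_norm_smul_sub_nonneg a b)
  have hpd := hHpd i (a - b)
  have hcsg := (real_inner_le_norm (g l - g i) (a - b)).trans
    (mul_le_mul_of_nonneg_right hgd (norm_nonneg _))
  have hHb : ‖(H l - H i) b‖ ≤ 2 * ΔH * M :=
    ((H l - H i).le_opNorm b).trans
      (mul_le_mul hHd hsup (norm_nonneg _) (by positivity))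
  have hcsH := (real_inner_le_norm ((H l - H i) b) (a - b)).trans
    (mul_le_mul_of_nonneg_right hHb (norm_nonneg _))
  have hsq : ⟪a, a - b⟫ - ⟪b, a - b⟫ = ‖a - b‖ ^ 2 := by
    rw [← inner_sub_left, real_inner_self_eq_norm_sq]
  have hδsq : δ2 * ⟪a, a - b⟫ - δ2 * ⟪b, a - b⟫ = δ2 * ‖a - b‖ ^ 2 := by
    rw [← hsq]; ring
  rw [map_sub, inner_sub_left] at hpd
  rw [inner_sub_left] at hcsg
  rw [_root_.sub_apply, inner_sub_left] at hcsH
  have hkey : (μhat + δ2) * ‖a - b‖ * ‖a - b‖ ≤ (2 * ΔH * M + 2 * Δg) * ‖a - b‖ := by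
    linarith
  have hpos : 0 < μhat + δ2 := by linarith
  have hd : ‖a - b‖ ≤ 1 / (μhat + δ2) * (2 * ΔH * M + 2 * Δg) := by
    rw [one_div_mul_eq_div, le_div_iff₀ hpos, mul_comm]
    rcases (norm_nonneg (a - b)).eq_or_lt with h0 | h0
    · have hM : 0 ≤ M := (norm_nonneg _).trans hsup
      have hΔg : 0 ≤ Δg := (norm_nonneg _).trans (hg i)
      rw [← h0, mul_zero]
      positivity
    · exact le_of_mul_le_mul_right hkey h0
  rw [hxs]
  exact (norm_add_le _ _).trans (add_le_add hd hvd)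
end
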